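/- arXiv:1712.09880 — 5 statements merged into one kernel-verified Lean document; each statement's English description precedes it below -/
import Mathlib

section
/- For every η > 0, n, m ∈ ℕ, and x, y ∈ ℝ, one has the absolutely convergent expansion ∫_ℝ e^{i η ξ y} H_{m,η}(ξ + x) H_{n,η}(ξ) dξ = ∑_{ℓ₁=0}^∞ ∑_{ℓ₂=0}^∞ η^{(ℓ₁+ℓ₂)/2} (iy)^{ℓ₁} x^{ℓ₂} / (ℓ₁! ℓ₂!) · ∫_ℝ ξ^{ℓ₁} H_m^{(ℓ₂)}(ξ) H_n(ξ) dξ, where H_m^{(ℓ₂)} denotes the ℓ₂-th derivative of H_m. -/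
open Complex

/-- The Hermite functions: `H 0 = π^{-1/4} e^{-x²/2}` and `H n = (2^n n!)^{-1/2} (-d/dx + x)^n H 0`. -/
noncomputable def hermiteFun (n : ℕ) : ℝ → ℝ := fun x =>
  ((2 ^ n * n.factorial : ℝ) ^ (-(1 : ℝ) / 2)) *
    ((fun f : ℝ → ℝ => fun t => -deriv f t + t * f t)^[n]
      (fun t => Real.pi ^ (-(1 : ℝ) / 4) * Real.exp (-(t ^ 2) / 2))) x

/-- The rescaled Hermite function `H_{n,η}(x) = η^{1/4} H_n(η^{1/2} x)`. -/
noncomputable def hermiteScaled (n : ℕ) (η : ℝ) : ℝ → ℝ := fun x =>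
  η ^ ((1 : ℝ) / 4) * hermiteFun n (η ^ ((1 : ℝ) / 2) * x)

open Polynomial in
lemma herm_iter (n : ℕ) : ∃ p : ℝ[X], 
    ((fun f : ℝ → ℝ => fun t => -deriv f t + t * f t)^[n]
      (fun t => Real.pi ^ (-(1 : ℝ) / 4) * Real.exp (-(t ^ 2) / 2))) =
    fun t => p.eval t * Real.exp (-(t ^ 2) / 2) := by
  induction n with
  | zero => exact ⟨C (Real.pi ^ (-(1 : ℝ) / 4)), by simp⟩
  | succ n ih =>
    obtain ⟨p, hp⟩ := ih
    refine ⟨-derivative p + 2 * X * p, ?_⟩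
    rw [Function.iterate_succ_apply', hp]
    funext t
    have h1 : HasDerivAt (fun t : ℝ => Real.exp (-(t ^ 2) / 2))
        (Real.exp (-(t ^ 2) / 2) * (-t)) t := by
      have h0 : HasDerivAt (fun t : ℝ => -(t ^ 2) / 2) (-t) t := by
        have := ((hasDerivAt_pow 2 t).neg).div_const 2
        exact HasDerivAt.congr_deriv this (by push_cast; ring)
      exact h0.exp
    have h2 := ((p.hasDerivAt t).mul h1).deriv
    change -deriv ((fun t => p.eval t) * fun t : ℝ => Real.exp (-(t ^ 2) / 2)) t + _ = _
    rw [h2]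
    simp
    ring

open Polynomial in
lemma herm_poly (n : ℕ) : ∃ p : ℝ[X], ∀ t, hermiteFun n t = p.eval t * Real.exp (-(t ^ 2) / 2) := by
  obtain ⟨p, hp⟩ := herm_iter n
  refine ⟨C ((2 ^ n * n.factorial : ℝ) ^ (-(1 : ℝ) / 2)) * p, fun t => ?_⟩
  unfold hermiteFun
  rw [hp]
  simp [mul_assoc]

open Polynomial in
lemma poly_exp_bound (p : ℝ[X]) : ∃ C : ℝ, 0 ≤ C ∧ ∀ z : ℂ, ‖aeval z p‖ ≤ C * Real.exp ‖z‖ := by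
  induction p using Polynomial.induction_on' with
  | add p q hp hq =>
    obtain ⟨C, hC, h⟩ := hp
    obtain ⟨D, hD, h'⟩ := hq
    refine ⟨C + D, by positivity, fun z => ?_⟩
    rw [map_add, add_mul]
    exact (norm_add_le _ _).trans (add_le_add (h z) (h' z))
  | monomial k a =>
    refine ⟨|a| * k.factorial, by positivity, fun z => ?_⟩
    rw [aeval_monomial, norm_mul, norm_pow]
    have := Real.pow_div_factorial_le_exp ‖z‖ (norm_nonneg z) k
    rw [div_le_iff₀ (by positivity)] at this
    simp only [Complex.coe_algebraMap, Complex.norm_real, Real.norm_eq_abs]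
    nlinarith [abs_nonneg a]

open Polynomial in
/-- entire extension, with growth bound -/
lemma herm_ext (n : ℕ) : ∃ F : ℂ → ℂ, Differentiable ℂ F ∧ (∀ t : ℝ, F t = (hermiteFun n t : ℂ)) ∧
    ∃ C : ℝ, 0 ≤ C ∧ (∀ t : ℝ, |hermiteFun n t| ≤ C * Real.exp |t| * Real.exp (-(t ^ 2) / 2)) ∧
      ∀ z : ℂ, ‖F z‖ ≤ C * Real.exp ‖z‖ * Real.exp (z.im ^ 2 / 2) := by
  obtain ⟨p, hp⟩ := herm_poly n
  obtain ⟨C, hC, hb⟩ := poly_exp_bound p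
  have hr : ∀ t : ℝ, aeval (t : ℂ) p = ((p.eval t : ℝ) : ℂ) := fun t => by
    have := Polynomial.aeval_algebraMap_apply ℂ t p
    simpa using this
  refine ⟨fun z => aeval z p * Complex.exp (-(z ^ 2) / 2), ?_, ?_, C, hC, ?_, ?_⟩
  · exact (Polynomial.differentiable_aeval p).mul (by fun_prop)
  · intro t
    rw [hp]
    simp only [hr]
    push_cast
    rfl
  · intro t
    rw [hp, abs_mul, abs_of_pos (Real.exp_pos _)]
    gcongr
    have := hb t
    rw [hr] at this
    simpa using this
  · intro z
    rw [norm_mul, Complex.norm_exp]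
    gcongr
    · exact hb z
    · have : (-(z ^ 2) / 2 : ℂ).re = -(z.re ^ 2 - z.im ^ 2) / 2 := by
        simp [pow_two]
      rw [this]
      nlinarith [sq_nonneg z.re]

lemma iter_real (f : ℝ → ℝ) (F : ℂ → ℂ) (hF : Differentiable ℂ F) (h : ∀ t : ℝ, F t = (f t : ℂ)) (l : ℕ) :
    ∀ t : ℝ, iteratedDeriv l F t = ((iteratedDeriv l f t : ℝ) : ℂ) := by
  induction l with
  | zero => simpa using h
  | succ l ih =>
    intro t
    have hd : DifferentiableAt ℂ (iteratedDeriv l F) t :=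
      ((hF.contDiff (n := ⊤)).differentiable_iteratedDeriv l (by exact_mod_cast WithTop.coe_lt_top _)) _
    have h1 := hd.hasDerivAt.real_of_complex
    have h2 := hd.hasDerivAt.comp_ofReal
    simp only [ih] at h1 h2
    rw [iteratedDeriv_succ, iteratedDeriv_succ]
    simp only [Complex.ofReal_re] at h1
    have h3 := h1.ofReal_comp
    have := h2.unique h3
    rw [this, h1.deriv]

lemma deriv_bound (m : ℕ) (R : ℝ) (hR : 0 < R) : ∃ C : ℝ, 0 ≤ C ∧ ∀ (l : ℕ) (t : ℝ),
    |iteratedDeriv l (hermiteFun m) t| ≤ l.factorial * (C * Real.exp |t|) / R ^ l := by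
  obtain ⟨F, hF, hFr, C, hC, -, hb⟩ := herm_ext m
  refine ⟨C * Real.exp R * Real.exp (R ^ 2 / 2), by positivity, fun l t => ?_⟩
  have := Complex.norm_iteratedDeriv_le_of_forall_mem_sphere_norm_le (c := (t : ℂ)) (R := R)
    (C := C * Real.exp R * Real.exp (R ^ 2 / 2) * Real.exp |t|) (F := ℂ) (f := F) l hR hF.diffContOnCl ?_
  · rw [iter_real _ F hF hFr] at this
    simpa using this
  · intro z hz
    have hz' : ‖z - t‖ = R := by simpa [dist_eq_norm] using hz
    have h1 : ‖z‖ ≤ R + |t| := by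
      have := norm_add_le (z - t) (t : ℂ)
      simp only [sub_add_cancel, Complex.norm_real, Real.norm_eq_abs] at this
      linarith
    have h2 : z.im ^ 2 ≤ R ^ 2 := by
      have := Complex.abs_im_le_norm (z - t)
      simp only [Complex.sub_im, Complex.ofReal_im, sub_zero] at this
      rw [hz'] at this
      exact sq_le_sq' (by linarith [neg_abs_le z.im]) (by linarith [le_abs_self z.im])
    calc ‖F z‖ ≤ C * Real.exp ‖z‖ * Real.exp (z.im ^ 2 / 2) := hb z
      _ ≤ C * Real.exp (R + |t|) * Real.exp (R ^ 2 / 2) := by gcongr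
      _ = _ := by rw [Real.exp_add]; ring

lemma gauss_int (c : ℝ) : MeasureTheory.Integrable
    (fun t : ℝ => Real.exp (c * |t|) * Real.exp (-(t ^ 2) / 2)) := by
  have h := (integrable_exp_neg_mul_sq (b := 1 / 4) (by norm_num)).const_mul (Real.exp (c ^ 2))
  refine h.mono' (by fun_prop) (Filter.Eventually.of_forall fun t => ?_)
  rw [Real.norm_of_nonneg (by positivity), ← Real.exp_add, ← Real.exp_add]
  apply Real.exp_le_exp.2
  nlinarith [sq_nonneg (c - |t| / 2), sq_abs t]

/-- the unscaled terms -/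
noncomputable def kterm (n m : ℕ) (a b : ℝ) (l : ℕ × ℕ) (t : ℝ) : ℂ :=
  (I * a * t) ^ l.1 / l.1.factorial * ((b : ℂ) ^ l.2 / l.2.factorial *
    ((iteratedDeriv l.2 (hermiteFun m) t : ℝ) : ℂ)) * (hermiteFun n t : ℂ)

lemma cont_iter (m l : ℕ) : Continuous (iteratedDeriv l (hermiteFun m)) := by
  obtain ⟨p, hp⟩ := herm_poly m
  have : hermiteFun m = fun t => p.eval t * Real.exp (-(t ^ 2) / 2) := funext hp
  have h : ContDiff ℝ (⊤ : ℕ∞) (hermiteFun m) := by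
    rw [this]
    have hp' : ContDiff ℝ (⊤ : ℕ∞) (fun t => p.eval t) := by
      simpa using p.contDiff_aeval (𝕜 := ℝ) (⊤ : ℕ∞)
    exact hp'.mul (by fun_prop)
  exact h.continuous_iteratedDeriv l (by exact_mod_cast le_top)

lemma kterm_bound (n m : ℕ) (a b : ℝ) : ∃ C : ℝ, 0 ≤ C ∧ ∀ (l : ℕ × ℕ) (t : ℝ),
    ‖kterm n m a b l t‖ ≤ ((1 / 2) ^ l.1 * (1 / 2) ^ l.2) *
      (C * (Real.exp ((2 * |a| + 2) * |t|) * Real.exp (-(t ^ 2) / 2))) := by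
  obtain ⟨F, hF, hFr, C, hC, hb, -⟩ := herm_ext n
  obtain ⟨D, hD, hd⟩ := deriv_bound m (2 * |b| + 1) (by positivity)
  refine ⟨D * C, by positivity, fun l t => ?_⟩
  have e1 : (|a| * |t|) ^ l.1 / l.1.factorial ≤ (1 / 2) ^ l.1 * Real.exp (2 * |a| * |t|) := by
    have := Real.pow_div_factorial_le_exp (2 * |a| * |t|) (by positivity) l.1
    calc _ = (1 / 2) ^ l.1 * ((2 * |a| * |t|) ^ l.1 / l.1.factorial) := by
          rw [← mul_div_assoc, ← mul_pow]; congr 2; ring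
      _ ≤ _ := by gcongr
  have e2 : |b| ^ l.2 / l.2.factorial * |iteratedDeriv l.2 (hermiteFun m) t| ≤
      (1 / 2) ^ l.2 * (D * Real.exp |t|) := by
    calc _ ≤ |b| ^ l.2 / l.2.factorial *
          (l.2.factorial * (D * Real.exp |t|) / (2 * |b| + 1) ^ l.2) := by
          gcongr; exact hd _ _
      _ = (|b| / (2 * |b| + 1)) ^ l.2 * (D * Real.exp |t|) := by
          rw [div_pow]
          have : (l.2.factorial : ℝ) ≠ 0 := by positivity
          field_simp
      _ ≤ _ := by
          have : |b| / (2 * |b| + 1) ≤ 1 / 2 := by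
            rw [div_le_iff₀ (by positivity)]
            linarith
          exact mul_le_mul_of_nonneg_right (pow_le_pow_left₀ (by positivity) this _)
            (by positivity)
  have : ‖kterm n m a b l t‖ = (|a| * |t|) ^ l.1 / l.1.factorial *
      (|b| ^ l.2 / l.2.factorial * |iteratedDeriv l.2 (hermiteFun m) t|) * |hermiteFun n t| := by
    simp [kterm]
  rw [this]
  calc _ ≤ ((1 / 2) ^ l.1 * Real.exp (2 * |a| * |t|)) * ((1 / 2) ^ l.2 * (D * Real.exp |t|)) *
      (C * Real.exp |t| * Real.exp (-(t ^ 2) / 2)) := by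
        gcongr
        exact hb t
    _ = _ := by
      have : (2 * |a| + 2) * |t| = 2 * |a| * |t| + |t| + |t| := by ring
      rw [this, Real.exp_add, Real.exp_add]; ring

lemma kterm_int (n m : ℕ) (a b : ℝ) (l : ℕ × ℕ) : MeasureTheory.Integrable (kterm n m a b l) := by
  obtain ⟨C, hC, h⟩ := kterm_bound n m a b
  have c1 := cont_iter m l.2
  have c2 : Continuous (hermiteFun n) := by simpa using cont_iter n 0
  refine (((gauss_int (2 * |a| + 2)).const_mul C).const_mul
    ((1 / 2) ^ l.1 * (1 / 2) ^ l.2)).mono' ?_ (Filter.Eventually.of_forall (h l))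
  unfold kterm
  exact Continuous.aestronglyMeasurable (by fun_prop)

lemma summable_half : Summable (fun l : ℕ × ℕ => ((1 / 2 : ℝ) ^ l.1 * (1 / 2) ^ l.2)) :=
  Summable.mul_of_nonneg (f := fun k : ℕ => (1 / 2 : ℝ) ^ k) (g := fun k : ℕ => (1 / 2 : ℝ) ^ k)
    summable_geometric_two summable_geometric_two (fun _ => by positivity) (fun _ => by positivity)

lemma kterm_summable (n m : ℕ) (a b : ℝ) : Summable fun l => ∫ t, ‖kterm n m a b l t‖ := by
  obtain ⟨C, hC, h⟩ := kterm_bound n m a b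
  refine Summable.of_nonneg_of_le (fun l => MeasureTheory.integral_nonneg fun t => norm_nonneg _)
    (fun l => ?_) (summable_half.mul_right
      (∫ t : ℝ, (C * (Real.exp ((2 * |a| + 2) * |t|) * Real.exp (-(t ^ 2) / 2)))))
  rw [← MeasureTheory.integral_const_mul]
  exact MeasureTheory.integral_mono (kterm_int n m a b l).norm
    (((gauss_int (2 * |a| + 2)).const_mul C).const_mul _) (h l)

lemma kterm_hasSum (n m : ℕ) (a b t : ℝ) : HasSum (fun l => kterm n m a b l t)
    (Complex.exp (I * a * t) * (hermiteFun m (t + b) : ℂ) * (hermiteFun n t : ℂ)) := by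
  obtain ⟨F, hF, hFr, -⟩ := herm_ext m
  have h1 : HasSum (fun k : ℕ => (I * a * t) ^ k / (k.factorial : ℂ)) (Complex.exp (I * a * t)) := by
    rw [Complex.exp_eq_exp_ℂ]
    exact NormedSpace.expSeries_div_hasSum_exp _
  have h2 : HasSum (fun k : ℕ => (b : ℂ) ^ k / k.factorial *
      ((iteratedDeriv k (hermiteFun m) t : ℝ) : ℂ)) (hermiteFun m (t + b) : ℂ) := by
    have := Complex.hasSum_taylorSeries_of_entire hF (t : ℂ) ((t + b : ℝ) : ℂ)
    rw [hFr] at this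
    have e : (fun k : ℕ => (b : ℂ) ^ k / k.factorial *
        ((iteratedDeriv k (hermiteFun m) t : ℝ) : ℂ)) =
        fun k : ℕ => ((k.factorial : ℂ))⁻¹ • (((t + b : ℝ) : ℂ) - t) ^ k • iteratedDeriv k F t := by
      funext k
      rw [iter_real _ F hF hFr]
      simp only [smul_eq_mul, Complex.ofReal_add, add_sub_cancel_left, div_eq_mul_inv]
      ring
    rw [e]
    exact this
  have hs := summable_mul_of_summable_norm h1.summable.norm h2.summable.norm
  exact (h1.mul h2 hs).mul_right _

/-- Absolutely convergent double-series expansion of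
`∫ e^{iηξy} H_{m,η}(ξ+x) H_{n,η}(ξ) dξ`. -/
theorem kernel_series_expansion (η : ℝ) (hη : 0 < η) (n m : ℕ) (x y : ℝ) :
    Summable (fun ℓ : ℕ × ℕ =>
      ‖((η ^ (((ℓ.1 : ℝ) + ℓ.2) / 2) : ℝ) : ℂ) * (I * y) ^ ℓ.1 * (x : ℂ) ^ ℓ.2 /
          ((ℓ.1.factorial : ℂ) * ℓ.2.factorial) *
        ((∫ ξ : ℝ, ξ ^ ℓ.1 * iteratedDeriv ℓ.2 (hermiteFun m) ξ * hermiteFun n ξ : ℝ) : ℂ)‖) ∧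
    (∫ ξ : ℝ, Complex.exp (I * η * ξ * y) *
        (hermiteScaled m η (ξ + x) : ℂ) * (hermiteScaled n η ξ : ℂ)) =
      ∑' ℓ : ℕ × ℕ,
        ((η ^ (((ℓ.1 : ℝ) + ℓ.2) / 2) : ℝ) : ℂ) * (I * y) ^ ℓ.1 * (x : ℂ) ^ ℓ.2 /
            ((ℓ.1.factorial : ℂ) * ℓ.2.factorial) *
          ((∫ ξ : ℝ, ξ ^ ℓ.1 * iteratedDeriv ℓ.2 (hermiteFun m) ξ * hermiteFun n ξ : ℝ) : ℂ) := by
  set s : ℝ := η ^ ((1 : ℝ) / 2) with hs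
  have hs0 : 0 < s := by positivity
  have hss : s * s = η := by
    rw [hs, ← Real.rpow_add hη]; norm_num
  have hq : η ^ ((1 : ℝ) / 4) * η ^ ((1 : ℝ) / 4) = s := by
    rw [hs, ← Real.rpow_add hη]; norm_num
  have hterm : ∀ ℓ : ℕ × ℕ, ((η ^ (((ℓ.1 : ℝ) + ℓ.2) / 2) : ℝ) : ℂ) * (I * y) ^ ℓ.1 *
      (x : ℂ) ^ ℓ.2 / ((ℓ.1.factorial : ℂ) * ℓ.2.factorial) *
        ((∫ ξ : ℝ, ξ ^ ℓ.1 * iteratedDeriv ℓ.2 (hermiteFun m) ξ * hermiteFun n ξ : ℝ) : ℂ) =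
      ∫ t, kterm n m (s * y) (s * x) ℓ t := by
    intro ℓ
    have hp : η ^ (((ℓ.1 : ℝ) + ℓ.2) / 2) = s ^ ℓ.1 * s ^ ℓ.2 := by
      rw [hs, ← pow_add, ← Real.rpow_natCast, ← Real.rpow_mul hη.le]
      congr 1; push_cast; ring
    rw [hp, ← integral_complex_ofReal, ← MeasureTheory.integral_const_mul]
    congr 1
    funext t
    simp only [kterm]
    push_cast
    field_simp
    ring
  simp only [hterm]
  refine ⟨Summable.of_nonneg_of_le (fun _ => norm_nonneg _)
    (fun _ => MeasureTheory.norm_integral_le_integral_norm _)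
    (kterm_summable n m (s * y) (s * x)), ?_⟩
  have hsum := MeasureTheory.hasSum_integral_of_summable_integral_norm
    (kterm_int n m (s * y) (s * x)) (kterm_summable n m (s * y) (s * x))
  rw [hsum.tsum_eq]
  simp only [fun t => (kterm_hasSum n m (s * y) (s * x) t).tsum_eq]
  have hcv := MeasureTheory.Measure.integral_comp_mul_left (fun t : ℝ =>
    Complex.exp (I * ((s * y : ℝ) : ℂ) * t) * (hermiteFun m (t + s * x) : ℂ) * (hermiteFun n t : ℂ)) s
  rw [abs_of_pos (by positivity), Complex.real_smul] at hcv
  have hsc : (s : ℂ) ≠ 0 := by exact_mod_cast hs0.ne'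
  have key : ∀ A : ℂ, A = (s : ℂ) * (((s⁻¹ : ℝ) : ℂ) * A) := fun A => by
    push_cast; field_simp
  refine Eq.trans ?_ (key _).symm
  rw [← hcv, ← MeasureTheory.integral_const_mul]
  congr 1
  funext ξ
  simp only [hermiteScaled]
  rw [← hs, mul_add, ← hss]
  have hq' : ((η ^ ((1 : ℝ) / 4) : ℝ) : ℂ) * ((η ^ ((1 : ℝ) / 4) : ℝ) : ℂ) = s := by
    exact_mod_cast hq
  rw [hss, ← hq']
  have he : I * (η : ℂ) * ξ * y = I * ((s * y : ℝ) : ℂ) * ((s * ξ : ℝ) : ℂ) := by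
    rw [← hss]; push_cast; ring
  rw [he, Complex.ofReal_mul (η ^ ((1 : ℝ) / 4)), Complex.ofReal_mul (η ^ ((1 : ℝ) / 4))]
  ring
end

section
/- Let ℓ ∈ ℕ, a ≥ 0, ε ∈ {+1, −1}, and let (ε_q)_{q∈ℕ} be a sequence of positive reals and (n_q)_{q∈ℕ} a sequence of natural numbers such that ε_q → 0 and ε_q n_q → a/2 as q → ∞. Define the operators A f := f' + x f and C f := −f' + x f on smooth functions (so that ((A + C)/2)^ℓ f = x^ℓ f and ((A − C)/2)^ℓ f = f^{(ℓ)}). Then ‖ ε_q^{ℓ/2} ((A + εC)/2)^ℓ H_{n_q} − (a/4)^{ℓ/2} ∑_{ℓ'=0}^{ℓ} ε^{ℓ'} C(ℓ,ℓ') H_{n_q + 2ℓ' − ℓ} ‖_{L²(ℝ)} → 0 as q → ∞, with the convention H_k := 0 for k < 0. -/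
open Filter

/-- Hermite functions indexed by `ℤ`, with the convention `H_k = 0` for `k < 0`. -/
noncomputable def hermiteZ (k : ℤ) : ℝ → ℝ :=
  if 0 ≤ k then hermiteFun k.toNat else 0

open MeasureTheory Polynomial in
/-- Polynomial part of the Hermite functions. -/
noncomputable def hPoly : ℕ → Polynomial ℝ
  | 0 => 1
  | n + 1 => 2 * Polynomial.X * hPoly n - Polynomial.derivative (hPoly n)

lemma hPoly_derivative (n : ℕ) :
    Polynomial.derivative (hPoly (n + 1)) = 2 * ((n : Polynomial ℝ) + 1) * hPoly n := by
  induction n with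
  | zero => simp [hPoly]
  | succ n ih =>
    have h : hPoly (n + 1 + 1)
        = 2 * Polynomial.X * hPoly (n + 1) - Polynomial.derivative (hPoly (n + 1)) := rfl
    rw [h, ih]
    have h2 : hPoly (n + 1)
        = 2 * Polynomial.X * hPoly n - Polynomial.derivative (hPoly n) := rfl
    have e1 : Polynomial.derivative (2 * Polynomial.X * hPoly (n + 1)
          - 2 * ((n : Polynomial ℝ) + 1) * hPoly n)
        = 2 * hPoly (n + 1) + 2 * Polynomial.X * Polynomial.derivative (hPoly (n + 1))
          - 2 * ((n : Polynomial ℝ) + 1) * Polynomial.derivative (hPoly n) := by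
      simp [Polynomial.derivative_mul]
    rw [e1, ih]
    push_cast
    rw [h2]
    ring

lemma hasDerivAt_polyExp (c : ℝ) (p : Polynomial ℝ) (x : ℝ) :
    HasDerivAt (fun t => c * (p.eval t * Real.exp (-(t ^ 2) / 2)))
      (c * ((p.derivative.eval x - x * p.eval x) * Real.exp (-(x ^ 2) / 2))) x := by
  have h1 : HasDerivAt (fun t : ℝ => -(t ^ 2) / 2) (-x) x := by
    refine (((hasDerivAt_pow 2 x).fun_neg).div_const 2).congr_deriv ?_
    simp
    ring
  refine (((p.hasDerivAt x).fun_mul h1.exp).const_mul c).congr_deriv ?_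
  ring

lemma iterate_eq (n : ℕ) :
    ((fun f : ℝ → ℝ => fun t => -deriv f t + t * f t)^[n]
      (fun t => Real.pi ^ (-(1 : ℝ) / 4) * Real.exp (-(t ^ 2) / 2))) =
    fun t => Real.pi ^ (-(1 : ℝ) / 4) * ((hPoly n).eval t * Real.exp (-(t ^ 2) / 2)) := by
  induction n with
  | zero => simp [hPoly]
  | succ n ih =>
    rw [Function.iterate_succ_apply', ih]
    funext t
    simp only []
    rw [(hasDerivAt_polyExp _ _ _).deriv]
    simp [hPoly]
    ring

/-- Normalising constant. -/
noncomputable def hC (n : ℕ) : ℝ :=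
  ((2 ^ n * n.factorial : ℝ) ^ (-(1 : ℝ) / 2)) * Real.pi ^ (-(1 : ℝ) / 4)

lemma hermiteFun_eq (n : ℕ) :
    hermiteFun n = fun t => hC n * ((hPoly n).eval t * Real.exp (-(t ^ 2) / 2)) := by
  funext t
  unfold hermiteFun hC
  rw [iterate_eq]
  ring

lemma hC_succ (n : ℕ) : hC n = Real.sqrt (2 * ((n : ℝ) + 1)) * hC (n + 1) := by
  unfold hC
  have h : ((2 : ℝ) ^ (n + 1) * ((n + 1).factorial : ℝ))
      = (2 * ((n : ℝ) + 1)) * (2 ^ n * n.factorial) := by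
    rw [Nat.factorial_succ]; push_cast; ring
  have hp : (0 : ℝ) < 2 * ((n : ℝ) + 1) := by positivity
  rw [h, Real.mul_rpow hp.le (by positivity), Real.sqrt_eq_rpow, ← mul_assoc, ← mul_assoc,
    ← Real.rpow_add hp]
  norm_num

lemma sqrt_mul_hC (n : ℕ) :
    2 * ((n : ℝ) + 1) * hC (n + 1) = Real.sqrt (2 * ((n : ℝ) + 1)) * hC n := by
  rw [hC_succ n, ← mul_assoc, Real.mul_self_sqrt (by positivity)]

lemma hermiteFun_A (n : ℕ) (x : ℝ) :
    deriv (hermiteFun (n + 1)) x + x * hermiteFun (n + 1) x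
      = Real.sqrt (2 * ((n : ℝ) + 1)) * hermiteFun n x := by
  rw [hermiteFun_eq, hermiteFun_eq, (hasDerivAt_polyExp _ _ _).deriv, hPoly_derivative]
  simp only [Polynomial.eval_mul, Polynomial.eval_add, Polynomial.eval_natCast,
    Polynomial.eval_one, Polynomial.eval_ofNat]
  linear_combination ((hPoly n).eval x * Real.exp (-(x ^ 2) / 2)) * sqrt_mul_hC n

lemma hermiteFun_A0 (x : ℝ) :
    deriv (hermiteFun 0) x + x * hermiteFun 0 x = 0 := by
  rw [hermiteFun_eq, (hasDerivAt_polyExp _ _ _).deriv]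
  simp [hPoly]
  ring

lemma hermiteFun_C (n : ℕ) (x : ℝ) :
    -deriv (hermiteFun n) x + x * hermiteFun n x
      = Real.sqrt (2 * ((n : ℝ) + 1)) * hermiteFun (n + 1) x := by
  rw [hermiteFun_eq, hermiteFun_eq, (hasDerivAt_polyExp _ _ _).deriv, hC_succ n]
  simp only [hPoly, Polynomial.eval_mul, Polynomial.eval_sub, Polynomial.eval_X,
    Polynomial.eval_ofNat]
  ring

lemma hermiteFun_differentiable (n : ℕ) : Differentiable ℝ (hermiteFun n) := by
  rw [hermiteFun_eq]
  exact fun x => (hasDerivAt_polyExp _ _ x).differentiableAt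

lemma hermiteZ_nat (n : ℕ) : hermiteZ (n : ℤ) = hermiteFun n := by
  simp [hermiteZ]

lemma hermiteZ_neg (k : ℤ) (hk : k < 0) : hermiteZ k = 0 := by
  simp [hermiteZ, hk]

lemma hermiteZ_differentiable (k : ℤ) : Differentiable ℝ (hermiteZ k) := by
  unfold hermiteZ
  split_ifs
  · exact hermiteFun_differentiable _
  · exact differentiable_const (0 : ℝ)

lemma hermiteZ_A (k : ℤ) (x : ℝ) :
    deriv (hermiteZ k) x + x * hermiteZ k x = Real.sqrt (2 * (k : ℝ)) * hermiteZ (k - 1) x := by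
  rcases lt_trichotomy k 0 with h | h | h
  · rw [hermiteZ_neg k h, hermiteZ_neg (k - 1) (by omega)]
    simp
  · subst h
    have := hermiteZ_nat 0
    simp only [Nat.cast_zero] at this
    rw [this, hermiteFun_A0]
    simp
  · obtain ⟨n, rfl⟩ : ∃ n : ℕ, k = ((n + 1 : ℕ) : ℤ) := ⟨(k - 1).toNat, by omega⟩
    have e : ((n + 1 : ℕ) : ℤ) - 1 = (n : ℤ) := by push_cast; ring
    rw [e, hermiteZ_nat, hermiteZ_nat, hermiteFun_A]
    push_cast
    rfl

lemma hermiteZ_C (k : ℤ) (x : ℝ) :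
    -deriv (hermiteZ k) x + x * hermiteZ k x
      = Real.sqrt (2 * ((k : ℝ) + 1)) * hermiteZ (k + 1) x := by
  rcases lt_or_ge k 0 with h | h
  · rw [hermiteZ_neg k h]
    have : Real.sqrt (2 * ((k : ℝ) + 1)) = 0 := by
      apply Real.sqrt_eq_zero_of_nonpos
      have : (k : ℝ) ≤ -1 := by exact_mod_cast (by omega : k ≤ -1)
      linarith
    rw [this]
    simp
  · obtain ⟨n, rfl⟩ : ∃ n : ℕ, k = (n : ℤ) := ⟨k.toNat, by omega⟩
    have e : (n : ℤ) + 1 = ((n + 1 : ℕ) : ℤ) := by push_cast; ring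
    rw [e, hermiteZ_nat, hermiteZ_nat, hermiteFun_C]
    push_cast
    rfl

open MeasureTheory in
lemma integrable_poly_exp (p : Polynomial ℝ) :
    Integrable (fun x : ℝ => p.eval x * Real.exp (-(x ^ 2))) := by
  induction p using Polynomial.induction_on' with
  | add p q hp hq =>
    simp only [Polynomial.eval_add, add_mul]
    exact hp.add hq
  | monomial n c =>
    have h := integrable_rpow_mul_exp_neg_mul_sq (b := 1) one_pos (s := (n : ℝ))
      (by have : (0 : ℝ) ≤ n := n.cast_nonneg
          linarith)
    refine (h.const_mul c).congr (Filter.Eventually.of_forall fun x => ?_)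
    simp [mul_assoc]

open MeasureTheory in
lemma integrable_polyExp_mul (c d : ℝ) (p r : Polynomial ℝ) :
    Integrable (fun x : ℝ => (c * (p.eval x * Real.exp (-(x ^ 2) / 2)))
      * (d * (r.eval x * Real.exp (-(x ^ 2) / 2)))) := by
  refine ((integrable_poly_exp (p * r)).const_mul (c * d)).congr
    (Filter.Eventually.of_forall fun x => ?_)
  have : Real.exp (-(x ^ 2)) = Real.exp (-(x ^ 2) / 2) * Real.exp (-(x ^ 2) / 2) := by
    rw [← Real.exp_add]; ring_nf
  simp only [Polynomial.eval_mul, this]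
  ring

open MeasureTheory in
lemma hermiteFun_sq_integrable (n : ℕ) : Integrable (fun x => hermiteFun n x ^ 2) := by
  simp only [pow_two (hermiteFun n _)]
  rw [hermiteFun_eq]
  exact integrable_polyExp_mul _ _ _ _

open MeasureTheory in
lemma hermiteFun_sq_integral_succ (n : ℕ) :
    ∫ x, hermiteFun (n + 1) x ^ 2 = ∫ x, hermiteFun n x ^ 2 := by
  have hs : (0 : ℝ) < Real.sqrt (2 * ((n : ℝ) + 1)) := Real.sqrt_pos.2 (by positivity)
  have hd : ∀ m x, HasDerivAt (hermiteFun m) (deriv (hermiteFun m) x) x :=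
    fun m x => (hermiteFun_differentiable m x).hasDerivAt
  have hder : ∀ m, deriv (hermiteFun m) = fun x => hC m *
      (((hPoly m).derivative - Polynomial.X * hPoly m).eval x * Real.exp (-(x ^ 2) / 2)) := by
    intro m
    funext x
    rw [hermiteFun_eq, (hasDerivAt_polyExp _ _ _).deriv]
    simp
  have i1 : Integrable (fun x => hermiteFun n x * deriv (hermiteFun (n + 1)) x) := by
    rw [hder, hermiteFun_eq]
    exact integrable_polyExp_mul _ _ _ _
  have i2 : Integrable (fun x => deriv (hermiteFun n) x * hermiteFun (n + 1) x) := by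
    rw [hder, hermiteFun_eq]
    exact integrable_polyExp_mul _ _ _ _
  have i3 : Integrable (fun x => hermiteFun n x * hermiteFun (n + 1) x) := by
    rw [hermiteFun_eq, hermiteFun_eq]
    exact integrable_polyExp_mul _ _ _ _
  have hz : ∫ x, (hermiteFun n x * deriv (hermiteFun (n + 1)) x
      + deriv (hermiteFun n) x * hermiteFun (n + 1) x) = 0 := by
    have := integral_mul_deriv_eq_deriv_mul_of_integrable
      (fun x _ => hd n x) (fun x _ => hd (n + 1) x) i1 i2 i3
    rw [integral_add i1 i2, this]
    ring
  have e : ∀ x, hermiteFun n x * deriv (hermiteFun (n + 1)) x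
      + deriv (hermiteFun n) x * hermiteFun (n + 1) x
      = Real.sqrt (2 * ((n : ℝ) + 1)) * (hermiteFun n x ^ 2 - hermiteFun (n + 1) x ^ 2) := by
    intro x
    linear_combination hermiteFun n x * hermiteFun_A n x
      - hermiteFun (n + 1) x * hermiteFun_C n x
  simp only [e] at hz
  rw [integral_const_mul,
    integral_sub (hermiteFun_sq_integrable n) (hermiteFun_sq_integrable (n + 1))] at hz
  rcases mul_eq_zero.1 hz with h | h
  · exact absurd h hs.ne'
  · linarith

open MeasureTheory in
lemma hermiteFun_sq_integral (n : ℕ) :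
    ∫ x, hermiteFun n x ^ 2 = ∫ x, hermiteFun 0 x ^ 2 := by
  induction n with
  | zero => rfl
  | succ n ih => rw [hermiteFun_sq_integral_succ, ih]

open MeasureTheory in
lemma hermiteZ_sq (k : ℤ) : Integrable (fun x => hermiteZ k x ^ 2) ∧
    ∫ x, hermiteZ k x ^ 2 ≤ ∫ x, hermiteFun 0 x ^ 2 := by
  unfold hermiteZ
  split_ifs
  · exact ⟨hermiteFun_sq_integrable _, (hermiteFun_sq_integral _).le⟩
  · simp only [Pi.zero_apply]
    constructor
    · simp
    · simp only [ne_eq, OfNat.ofNat_ne_zero, not_false_eq_true, zero_pow, integral_zero]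
      exact integral_nonneg fun x => sq_nonneg _

/-- Coefficients of the iterates: `hCoef ε n ℓ l` is the coefficient of `H_{n+2l-ℓ}`. -/
noncomputable def hCoef (ε : ℝ) (n : ℕ) : ℕ → ℕ → ℝ
  | 0, 0 => 1
  | 0, _ + 1 => 0
  | ℓ + 1, 0 => hCoef ε n ℓ 0 * (Real.sqrt (2 * ((n : ℝ) - ℓ)) / 2)
  | ℓ + 1, l + 1 =>
      hCoef ε n ℓ (l + 1) * (Real.sqrt (2 * ((n : ℝ) + 2 * (l + 1) - ℓ)) / 2)
      + ε * (hCoef ε n ℓ l * (Real.sqrt (2 * ((n : ℝ) + 2 * l - ℓ + 1)) / 2))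

lemma hCoef_eq_zero (ε : ℝ) (n : ℕ) (ℓ l : ℕ) (h : ℓ < l) : hCoef ε n ℓ l = 0 := by
  induction ℓ generalizing l with
  | zero =>
    obtain ⟨m, rfl⟩ : ∃ m, l = m + 1 := ⟨l - 1, by omega⟩
    simp [hCoef]
  | succ ℓ ih =>
    obtain ⟨m, rfl⟩ : ∃ m, l = m + 1 := ⟨l - 1, by omega⟩
    simp [hCoef, ih (m + 1) (by omega), ih m (by omega)]

lemma iterate_hCoef (ε : ℝ) (n ℓ : ℕ) :
    ((fun f : ℝ → ℝ => fun t =>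
      ((deriv f t + t * f t) + ε * (-deriv f t + t * f t)) / 2)^[ℓ] (hermiteFun n)) =
    fun x => ∑ l ∈ Finset.range (ℓ + 1), hCoef ε n ℓ l * hermiteZ ((n : ℤ) + 2 * l - ℓ) x := by
  induction ℓ with
  | zero =>
    funext x
    simp [hCoef, hermiteZ_nat]
  | succ ℓ ih =>
    rw [Function.iterate_succ_apply', ih]
    funext x
    simp only []
    have hd : deriv (fun x => ∑ l ∈ Finset.range (ℓ + 1),
        hCoef ε n ℓ l * hermiteZ ((n : ℤ) + 2 * l - ℓ) x) x
        = ∑ l ∈ Finset.range (ℓ + 1),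
        hCoef ε n ℓ l * deriv (hermiteZ ((n : ℤ) + 2 * l - ℓ)) x := by
      apply HasDerivAt.deriv
      apply HasDerivAt.fun_sum
      intro l _
      exact (hermiteZ_differentiable _ x).hasDerivAt.const_mul _
    rw [hd]
    set u : ℕ → ℝ := fun l => hCoef ε n ℓ l * (Real.sqrt (2 * ((n : ℝ) + 2 * l - ℓ)) / 2)
      * hermiteZ ((n : ℤ) + 2 * l - (ℓ + 1 : ℕ)) x with hu
    set v : ℕ → ℝ := fun l => ε * (hCoef ε n ℓ l *
      (Real.sqrt (2 * ((n : ℝ) + 2 * l - ℓ + 1)) / 2))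
      * hermiteZ ((n : ℤ) + 2 * (l + 1 : ℕ) - (ℓ + 1 : ℕ)) x with hv
    have hL : ((∑ l ∈ Finset.range (ℓ + 1),
          hCoef ε n ℓ l * deriv (hermiteZ ((n : ℤ) + 2 * l - ℓ)) x)
        + x * (∑ l ∈ Finset.range (ℓ + 1), hCoef ε n ℓ l * hermiteZ ((n : ℤ) + 2 * l - ℓ) x)
        + ε * (-(∑ l ∈ Finset.range (ℓ + 1),
          hCoef ε n ℓ l * deriv (hermiteZ ((n : ℤ) + 2 * l - ℓ)) x)
        + x * (∑ l ∈ Finset.range (ℓ + 1), hCoef ε n ℓ l * hermiteZ ((n : ℤ) + 2 * l - ℓ) x))) / 2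
        = ∑ l ∈ Finset.range (ℓ + 1), (u l + v l) := by
      rw [Finset.mul_sum, ← Finset.sum_neg_distrib, ← Finset.sum_add_distrib,
        ← Finset.sum_add_distrib, Finset.mul_sum, ← Finset.sum_add_distrib, Finset.sum_div]
      refine Finset.sum_congr rfl fun l _ => ?_
      have hA := hermiteZ_A ((n : ℤ) + 2 * l - ℓ) x
      have hC := hermiteZ_C ((n : ℤ) + 2 * l - ℓ) x
      have e1 : (n : ℤ) + 2 * l - ℓ - 1 = (n : ℤ) + 2 * l - (ℓ + 1 : ℕ) := by push_cast; ring
      have e2 : (n : ℤ) + 2 * l - ℓ + 1 = (n : ℤ) + 2 * (l + 1 : ℕ) - (ℓ + 1 : ℕ) := by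
        push_cast; ring
      rw [e1] at hA
      rw [e2] at hC
      push_cast at hA hC
      simp only [hu, hv]
      push_cast
      linear_combination (hCoef ε n ℓ l / 2) * hA + (ε * hCoef ε n ℓ l / 2) * hC
    rw [hL, Finset.sum_range_succ' _ (ℓ + 1), Finset.sum_add_distrib]
    have hu0 : u (ℓ + 1) = 0 := by
      simp [hu, hCoef_eq_zero ε n ℓ (ℓ + 1) (by omega)]
    have hsum : ∑ l ∈ Finset.range (ℓ + 1), u l
        = ∑ l ∈ Finset.range (ℓ + 1), u (l + 1) + u 0 := by
      rw [← Finset.sum_range_succ' u, Finset.sum_range_succ u (ℓ + 1), hu0, add_zero]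
    rw [hsum, add_right_comm, ← Finset.sum_add_distrib]
    congr 1
    · refine Finset.sum_congr rfl fun l _ => ?_
      simp only [hu, hv, hCoef]
      push_cast
      ring
    · simp only [hu, hCoef]
      simp

lemma sqrt_tendsto (a : ℝ) (b : ℝ)
    (εq : ℕ → ℝ) (nq : ℕ → ℕ) (hεq : ∀ q, 0 < εq q)
    (h1 : Tendsto εq atTop (nhds 0))
    (h2 : Tendsto (fun q => εq q * nq q) atTop (nhds (a / 2))) :
    Tendsto (fun q => Real.sqrt (εq q) * (Real.sqrt (2 * ((nq q : ℝ) + b)) / 2)) atTop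
      (nhds (Real.sqrt (a / 4))) := by
  have h : Tendsto (fun q => Real.sqrt ((εq q * nq q + εq q * b) / 2)) atTop
      (nhds (Real.sqrt ((a / 2 + 0 * b) / 2))) :=
    ((h2.add (h1.mul_const b)).div_const 2).sqrt
  have e : (a / 2 + 0 * b) / 2 = a / 4 := by ring
  rw [e] at h
  refine h.congr fun q => ?_
  have h4 : Real.sqrt 4 = 2 := by
    rw [show (4 : ℝ) = 2 ^ 2 by norm_num]
    exact Real.sqrt_sq (by norm_num)
  rw [← mul_div_assoc, ← Real.sqrt_mul (hεq q).le]
  rw [show (εq q * nq q + εq q * b) / 2 = εq q * (2 * ((nq q : ℝ) + b)) / 4 by ring,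
    Real.sqrt_div' _ (by norm_num), h4]

lemma hCoef_tendsto (a : ℝ) (ε : ℝ)
    (εq : ℕ → ℝ) (nq : ℕ → ℕ) (hεq : ∀ q, 0 < εq q)
    (h1 : Tendsto εq atTop (nhds 0))
    (h2 : Tendsto (fun q => εq q * nq q) atTop (nhds (a / 2))) (ℓ l : ℕ) :
    Tendsto (fun q => Real.sqrt (εq q) ^ ℓ * hCoef ε (nq q) ℓ l) atTop
      (nhds (Real.sqrt (a / 4) ^ ℓ * (ε ^ l * (ℓ.choose l : ℝ)))) := by
  induction ℓ generalizing l with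
  | zero =>
    cases l with
    | zero => simp [hCoef]
    | succ l => simp [hCoef]
  | succ ℓ ih =>
    cases l with
    | zero =>
      have := (ih 0).mul (sqrt_tendsto a (-(ℓ : ℝ)) εq nq hεq h1 h2)
      convert this using 1
      · funext q
        simp only [hCoef, ← sub_eq_add_neg]
        ring
      · simp [pow_succ]
    | succ l =>
      have t1 := (ih (l + 1)).mul
        (sqrt_tendsto a (2 * ((l : ℝ) + 1) - ℓ) εq nq hεq h1 h2)
      have t2 := ((ih l).mul (sqrt_tendsto a (2 * (l : ℝ) - ℓ + 1) εq nq hεq h1 h2)).const_mul ε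
      convert t1.add t2 using 1
      · funext q
        simp only [hCoef]
        rw [show (nq q : ℝ) + 2 * (l + 1) - ℓ = nq q + (2 * (l + 1) - ℓ) by ring,
          show (nq q : ℝ) + 2 * l - ℓ + 1 = nq q + (2 * l - ℓ + 1) by ring]
        ring
      · rw [Nat.choose_succ_succ]
        push_cast
        congr 1
        ring

lemma rpow_half_nat (x : ℝ) (hx : 0 ≤ x) (ℓ : ℕ) : x ^ ((ℓ : ℝ) / 2) = Real.sqrt x ^ ℓ := by
  rw [Real.sqrt_eq_rpow, ← Real.rpow_natCast, ← Real.rpow_mul hx]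
  congr 1
  ring

/-- Asymptotic commutation lemma: with `A f = f' + xf`, `C f = -f' + xf`, if `ε_q → 0` and
`ε_q n_q → a/2`, then `ε_q^{ℓ/2} ((A ± C)/2)^ℓ H_{n_q}` is `L²`-close to
`(a/4)^{ℓ/2} ∑_{ℓ'} (±1)^{ℓ'} C(ℓ,ℓ') H_{n_q + 2ℓ' - ℓ}`. -/
theorem asymptotic_creation_annihilation (ℓ : ℕ) (a : ℝ) (ha : 0 ≤ a)
    (ε : ℝ) (hε : ε = 1 ∨ ε = -1)
    (εq : ℕ → ℝ) (nq : ℕ → ℕ) (hεq : ∀ q, 0 < εq q)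
    (h1 : Tendsto εq atTop (nhds 0))
    (h2 : Tendsto (fun q => εq q * nq q) atTop (nhds (a / 2))) :
    Tendsto (fun q =>
      (∫ x : ℝ,
        ((εq q) ^ ((ℓ : ℝ) / 2) *
            ((fun f : ℝ → ℝ => fun t =>
                ((deriv f t + t * f t) + ε * (-deriv f t + t * f t)) / 2)^[ℓ]
              (hermiteFun (nq q))) x -
          (a / 4) ^ ((ℓ : ℝ) / 2) *
            ∑ l ∈ Finset.range (ℓ + 1),
              ε ^ l * (ℓ.choose l : ℝ) * hermiteZ ((nq q : ℤ) + 2 * l - ℓ) x) ^ 2) ^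
        ((1 : ℝ) / 2))
      atTop (nhds 0) := by
  set d : ℕ → ℕ → ℝ := fun q l => Real.sqrt (εq q) ^ ℓ * hCoef ε (nq q) ℓ l
    - Real.sqrt (a / 4) ^ ℓ * (ε ^ l * (ℓ.choose l : ℝ)) with hd
  have hd0 : ∀ l, Tendsto (fun q => d q l) atTop (nhds 0) := by
    intro l
    have := (hCoef_tendsto a ε εq nq hεq h1 h2 ℓ l).sub_const
      (Real.sqrt (a / 4) ^ ℓ * (ε ^ l * (ℓ.choose l : ℝ)))
    rwa [sub_self] at this
  have key : ∀ q x, ((εq q) ^ ((ℓ : ℝ) / 2) *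
            ((fun f : ℝ → ℝ => fun t =>
                ((deriv f t + t * f t) + ε * (-deriv f t + t * f t)) / 2)^[ℓ]
              (hermiteFun (nq q))) x -
          (a / 4) ^ ((ℓ : ℝ) / 2) *
            ∑ l ∈ Finset.range (ℓ + 1),
              ε ^ l * (ℓ.choose l : ℝ) * hermiteZ ((nq q : ℤ) + 2 * l - ℓ) x)
      = ∑ l ∈ Finset.range (ℓ + 1), d q l * hermiteZ ((nq q : ℤ) + 2 * l - ℓ) x := by
    intro q x
    rw [iterate_hCoef, rpow_half_nat _ (hεq q).le, rpow_half_nat _ (by positivity),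
      Finset.mul_sum, Finset.mul_sum, ← Finset.sum_sub_distrib]
    refine Finset.sum_congr rfl fun l _ => ?_
    simp only [hd]
    ring
  simp only [key]
  set M : ℝ := ∫ x, hermiteFun 0 x ^ 2 with hM
  have hI : Tendsto (fun q => ∫ x : ℝ,
      (∑ l ∈ Finset.range (ℓ + 1), d q l * hermiteZ ((nq q : ℤ) + 2 * l - ℓ) x) ^ 2)
      atTop (nhds 0) := by
    have hB : Tendsto (fun q => ((ℓ : ℝ) + 1) * ∑ l ∈ Finset.range (ℓ + 1), d q l ^ 2 * M)
        atTop (nhds (((ℓ : ℝ) + 1) * ∑ l ∈ Finset.range (ℓ + 1), 0 ^ 2 * M)) :=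
      (tendsto_finsetSum _ fun l _ => ((hd0 l).pow 2).mul_const M).const_mul _
    simp only [ne_eq, OfNat.ofNat_ne_zero, not_false_eq_true, zero_pow, zero_mul,
      Finset.sum_const_zero, mul_zero] at hB
    refine squeeze_zero (fun q => MeasureTheory.integral_nonneg fun x => sq_nonneg _)
      (fun q => ?_) hB
    have hint : ∀ l ∈ Finset.range (ℓ + 1), MeasureTheory.Integrable
        (fun x => d q l ^ 2 * hermiteZ ((nq q : ℤ) + 2 * l - ℓ) x ^ 2) :=
      fun l _ => (hermiteZ_sq _).1.const_mul _
    calc ∫ x : ℝ, (∑ l ∈ Finset.range (ℓ + 1),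
            d q l * hermiteZ ((nq q : ℤ) + 2 * l - ℓ) x) ^ 2
        ≤ ∫ x : ℝ, ((ℓ : ℝ) + 1) * ∑ l ∈ Finset.range (ℓ + 1),
            d q l ^ 2 * hermiteZ ((nq q : ℤ) + 2 * l - ℓ) x ^ 2 := by
          refine MeasureTheory.integral_mono_of_nonneg
            (Filter.Eventually.of_forall fun x => sq_nonneg _)
            ((MeasureTheory.integrable_finsetSum _ hint).const_mul _)
            (Filter.Eventually.of_forall fun x => ?_)
          have := sq_sum_le_card_mul_sum_sq (s := Finset.range (ℓ + 1))
            (f := fun l : ℕ => d q l * hermiteZ ((nq q : ℤ) + 2 * l - ℓ) x)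
          simpa [mul_pow] using this
      _ = ((ℓ : ℝ) + 1) * ∑ l ∈ Finset.range (ℓ + 1),
            d q l ^ 2 * ∫ x : ℝ, hermiteZ ((nq q : ℤ) + 2 * l - ℓ) x ^ 2 := by
          rw [MeasureTheory.integral_const_mul, MeasureTheory.integral_finsetSum _ hint]
          simp only [MeasureTheory.integral_const_mul]
      _ ≤ _ := by
          gcongr with l _
          exact (hermiteZ_sq _).2
  have := hI.rpow_const (p := (1 : ℝ) / 2) (Or.inr (by norm_num))
  rwa [Real.zero_rpow (by norm_num)] at this
end

section
/- Let b ∈ ℤ, a ≥ 0, x, y ∈ ℝ, and let (ε_q)_{q∈ℕ} be a sequence of positive reals and (n_q)_{q∈ℕ} a sequence of natural numbers such that ε_q → 0, ε_q n_q → a/2, and m_q := n_q + b ≥ 0 for all sufficiently large q. Then ∫_ℝ e^{i ε_q ξ y} H_{m_q, ε_q}(ξ + x) H_{n_q, ε_q}(ξ) dξ converges, as q → ∞, to K(a, x, y, b) = ∑_{ℓ₁,ℓ₂=0}^∞ (a/4)^{(ℓ₁+ℓ₂)/2} F_{ℓ₁,ℓ₂}(b) (iy)^{ℓ₁} x^{ℓ₂}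 / (ℓ₁! ℓ₂!). -/
open Filter Complex

/-- The alternate Vandermonde convolution `F_{ℓ₁,ℓ₂}(k)`. -/
def altVandermonde (ℓ₁ ℓ₂ : ℕ) (k : ℤ) : ℤ :=
  ∑ l₁ ∈ Finset.range (ℓ₁ + 1), ∑ l₂ ∈ Finset.range (ℓ₂ + 1),
    (-1) ^ (ℓ₂ - l₂) * (ℓ₁.choose l₁ : ℤ) * (ℓ₂.choose l₂ : ℤ) *
      (if 2 * ((l₁ : ℤ) + l₂) = k + ℓ₁ + ℓ₂ then 1 else 0)

/-- The boundary Fourier kernel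
`K(a,x,y,b) = ∑_{ℓ₁,ℓ₂} (a/4)^{(ℓ₁+ℓ₂)/2} F_{ℓ₁,ℓ₂}(b) (iy)^{ℓ₁} x^{ℓ₂}/(ℓ₁! ℓ₂!)`. -/
noncomputable def boundaryKernel (a x y : ℝ) (b : ℤ) : ℂ :=
  ∑' ℓ : ℕ × ℕ,
    (((a / 4) ^ (((ℓ.1 : ℝ) + ℓ.2) / 2) : ℝ) : ℂ) * (altVandermonde ℓ.1 ℓ.2 b : ℂ) *
      (I * y) ^ ℓ.1 * (x : ℂ) ^ ℓ.2 / ((ℓ.1.factorial : ℂ) * ℓ.2.factorial)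

/-- Unnormalized Hermite functions. -/
noncomputable def hU (n : ℕ) : ℝ → ℝ :=
  (fun f : ℝ → ℝ => fun t => -deriv f t + t * f t)^[n]
      (fun t => Real.pi ^ (-(1 : ℝ) / 4) * Real.exp (-(t ^ 2) / 2))

lemma hU_zero (s : ℝ) : hU 0 s = Real.pi ^ (-(1 : ℝ) / 4) * Real.exp (-(s ^ 2) / 2) := rfl

lemma hU_succ (n : ℕ) (s : ℝ) : hU (n + 1) s = -deriv (hU n) s + s * hU n s := by
  unfold hU
  rw [Function.iterate_succ_apply']

lemma hU_hasDerivAt (n : ℕ) : ∀ s, HasDerivAt (hU n) (2 * n * hU (n - 1) s - s * hU n s) s := by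
  induction n using Nat.strong_induction_on with
  | _ n ih =>
    have hrc : ∀ k, k < n → ∀ s, hU (k + 1) s = 2 * s * hU k s - 2 * k * hU (k - 1) s := by
      intro k hk s
      rw [hU_succ, (ih k hk s).deriv]; ring
    rcases n with _ | n
    · intro s
      have h : HasDerivAt (fun t : ℝ => Real.pi ^ (-(1 : ℝ) / 4) * Real.exp (-(t ^ 2) / 2))
          (Real.pi ^ (-(1 : ℝ) / 4) * (Real.exp (-(s ^ 2) / 2) * (-(2 * s) / 2))) s := by
        have h1 : HasDerivAt (fun t : ℝ => -(t ^ 2) / 2) (-(2 * s) / 2) s := by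
          simpa using ((hasDerivAt_pow 2 s).neg.div_const 2)
        exact h1.exp.const_mul _
      have h2 : hU 0 = (fun t : ℝ => Real.pi ^ (-(1 : ℝ) / 4) * Real.exp (-(t ^ 2) / 2)) := rfl
      rw [h2]
      convert h using 1
      push_cast; ring
    · intro s
      have e : hU (n + 1) = fun s => 2 * s * hU n s - 2 * n * hU (n - 1) s := by
        funext s; exact hrc n (by omega) s
      have d1 := ih n (by omega) s
      have d2 := ih (n - 1) (by omega) s
      have d : HasDerivAt (fun s => 2 * s * hU n s - 2 * n * hU (n - 1) s)
          ((2 * 1) * hU n s + 2 * s * (2 * n * hU (n - 1) s - s * hU n s) -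
            2 * n * (2 * (n - 1 : ℕ) * hU (n - 1 - 1) s - s * hU (n - 1) s)) s :=
        (((hasDerivAt_id s).const_mul 2).mul d1).sub (d2.const_mul _)
      have r1 := hrc n (by omega) s
      rw [← e] at d
      convert d using 1
      rw [r1]
      rcases n with _ | n
      · simp; ring
      · have r2 := hrc n (by omega) s
        simp only [Nat.add_sub_cancel] at *
        rw [r2]; push_cast; ring

lemma hU_rec (n : ℕ) (s : ℝ) : hU (n + 1) s = 2 * s * hU n s - 2 * n * hU (n - 1) s := by
  rw [hU_succ, (hU_hasDerivAt n s).deriv]; ring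

lemma abs_le_exp (δ : ℝ) (hδ : 0 < δ) (s : ℝ) : |s| ≤ (1 + 1 / δ) * Real.exp (δ * s ^ 2) := by
  have h1 := Real.add_one_le_exp (δ * s ^ 2)
  have h2 : |s| ≤ 1 + s ^ 2 := by
    rw [← sq_abs]; nlinarith [sq_nonneg (|s| - 1), abs_nonneg s]
  have h3 : (1 + 1 / δ) * (δ * s ^ 2 + 1) ≤ (1 + 1 / δ) * Real.exp (δ * s ^ 2) := by gcongr
  have h4 : (1 + 1 / δ) * (δ * s ^ 2 + 1) = δ * s ^ 2 + 1 + s ^ 2 + 1 / δ := by field_simp; ring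
  have : 0 < 1 / δ := by positivity
  nlinarith [sq_nonneg s, mul_nonneg hδ.le (sq_nonneg s)]

lemma hU_bound (n : ℕ) : ∀ δ : ℝ, 0 < δ →
    ∃ C, 0 ≤ C ∧ ∀ s, |hU n s| ≤ C * Real.exp (-(1 / 2 - δ) * s ^ 2) := by
  induction n using Nat.strong_induction_on with
  | _ n ih =>
    intro δ hδ
    rcases n with _ | n
    · refine ⟨Real.pi ^ (-(1 : ℝ) / 4), by positivity, fun s => ?_⟩
      rw [hU_zero, abs_of_nonneg (by positivity)]
      gcongr
      nlinarith [mul_nonneg hδ.le (sq_nonneg s)]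
    · obtain ⟨C1, hC1, h1⟩ := ih n (by omega) (δ / 2) (by positivity)
      obtain ⟨C2, hC2, h2⟩ := ih (n - 1) (by omega) δ hδ
      refine ⟨2 * (1 + 1 / (δ / 2)) * C1 + 2 * n * C2, by positivity, fun s => ?_⟩
      have h3 := abs_le_exp (δ / 2) (by positivity) s
      have h4 : |s| * |hU n s| ≤ ((1 + 1 / (δ / 2)) * C1) * Real.exp (-(1 / 2 - δ) * s ^ 2) := by
        calc |s| * |hU n s| ≤ ((1 + 1 / (δ / 2)) * Real.exp (δ / 2 * s ^ 2)) *
              (C1 * Real.exp (-(1 / 2 - δ / 2) * s ^ 2)) := by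
              gcongr; exact h1 s
          _ = ((1 + 1 / (δ / 2)) * C1) *
              (Real.exp (δ / 2 * s ^ 2) * Real.exp (-(1 / 2 - δ / 2) * s ^ 2)) := by ring
          _ = _ := by
              rw [← Real.exp_add]; ring_nf
      rw [hU_rec]
      calc |2 * s * hU n s - 2 * n * hU (n - 1) s|
          ≤ |2 * s * hU n s| + |2 * n * hU (n - 1) s| := abs_sub _ _
        _ = 2 * (|s| * |hU n s|) + 2 * n * |hU (n - 1) s| := by
            simp only [abs_mul, Nat.abs_cast, abs_two]; ring
        _ ≤ 2 * (((1 + 1 / (δ / 2)) * C1) * Real.exp (-(1 / 2 - δ) * s ^ 2)) +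
            2 * n * (C2 * Real.exp (-(1 / 2 - δ) * s ^ 2)) := by
            gcongr; exact h2 s
        _ = _ := by ring

lemma hU_cont (n : ℕ) : Continuous (hU n) :=
  continuous_iff_continuousAt.2 fun s => (hU_hasDerivAt n s).continuousAt

/-- integrand -/
noncomputable def hG (ω t : ℝ) (m n : ℕ) (s : ℝ) : ℂ :=
  Complex.exp (I * ω * s) * (hU m (s + t) : ℂ) * (hU n s : ℂ)

lemma hG_integrable (ω t : ℝ) (m n : ℕ) : MeasureTheory.Integrable (hG ω t m n) := by
  obtain ⟨C1, hC1, h1⟩ := hU_bound m (1 / 4) (by norm_num)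
  obtain ⟨C2, hC2, h2⟩ := hU_bound n (1 / 4) (by norm_num)
  have hi := (integrable_exp_neg_mul_sq (b := 1 / 4) (by norm_num)).const_mul (C1 * C2)
  refine hi.mono' ?_ ?_
  · apply Continuous.aestronglyMeasurable
    unfold hG
    have := hU_cont m
    have := hU_cont n
    fun_prop
  · refine Eventually.of_forall fun s => ?_
    have e : I * (ω : ℂ) * s = ((ω * s : ℝ) : ℂ) * I := by push_cast; ring
    unfold hG
    rw [e, norm_mul, norm_mul, Complex.norm_exp_ofReal_mul_I, one_mul, Complex.norm_real,
      Complex.norm_real, Real.norm_eq_abs, Real.norm_eq_abs, mul_assoc]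
    have h1' : |hU m (s + t)| ≤ C1 := by
      refine (h1 _).trans (mul_le_of_le_one_right hC1 ?_)
      rw [Real.exp_le_one_iff]; nlinarith [sq_nonneg (s + t)]
    have h2' := h2 s
    norm_num at h2' ⊢
    gcongr

noncomputable def hI (ω t : ℝ) (m n : ℕ) : ℂ := ∫ s, hG ω t m n s

lemma hG_hasDerivAt (ω t : ℝ) (m n : ℕ) (s : ℝ) : HasDerivAt (hG ω t m n)
    (I * ω * hG ω t m n s
      + Complex.exp (I * ω * s) *
          ((2 * m * hU (m - 1) (s + t) - (s + t) * hU m (s + t) : ℝ) : ℂ) * (hU n s : ℂ)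
      + Complex.exp (I * ω * s) * (hU m (s + t) : ℂ) *
          ((2 * n * hU (n - 1) s - s * hU n s : ℝ) : ℂ)) s := by
  have h1 : HasDerivAt (fun s : ℝ => Complex.exp (I * ω * s))
      (Complex.exp (I * ω * s) * (I * ω * 1)) s := by
    exact ((Complex.ofRealCLM.hasDerivAt (x := s)).const_mul (I * (ω : ℂ))).cexp
  have h2 : HasDerivAt (fun s : ℝ => (hU m (s + t) : ℂ))
      ((2 * m * hU (m - 1) (s + t) - (s + t) * hU m (s + t) : ℝ) : ℂ) s :=
    ((hU_hasDerivAt m (s + t)).comp_add_const s t).ofReal_comp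
  have h3 := (hU_hasDerivAt n s).ofReal_comp
  have h := (h1.mul h2).mul h3
  refine h.congr_deriv ?_
  unfold hG
  simp only [Pi.mul_apply]
  ring

lemma hI_rec1 (ω t : ℝ) (m n : ℕ) :
    hI ω t m (n + 1) = (I * ω - t) * hI ω t m n + 2 * m * hI ω t (m - 1) n := by
  have hi : MeasureTheory.Integrable (fun s => (I * ω - t) * hG ω t m n s
      + 2 * m * hG ω t (m - 1) n s - hG ω t m (n + 1) s) :=
    (((hG_integrable ω t m n).const_mul _).add ((hG_integrable ω t (m - 1) n).const_mul _)).sub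
      (hG_integrable ω t m (n + 1))
  have h := MeasureTheory.integral_eq_zero_of_hasDerivAt_of_integrable (f := hG ω t m n)
    (f' := fun s => (I * ω - t) * hG ω t m n s
      + 2 * m * hG ω t (m - 1) n s - hG ω t m (n + 1) s)
    (fun s => by
      refine (hG_hasDerivAt ω t m n s).congr_deriv ?_
      unfold hG
      rw [hU_rec n s]
      push_cast
      ring) hi (hG_integrable ω t m n)
  have hi2 : MeasureTheory.Integrable (fun s => (I * ω - t) * hG ω t m n s
      + 2 * m * hG ω t (m - 1) n s) :=
    (((hG_integrable ω t m n).const_mul _).add ((hG_integrable ω t (m - 1) n).const_mul _))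
  rw [MeasureTheory.integral_sub hi2 (hG_integrable ω t m (n + 1)),
    MeasureTheory.integral_add ((hG_integrable ω t m n).const_mul _)
      ((hG_integrable ω t (m - 1) n).const_mul _),
    MeasureTheory.integral_const_mul, MeasureTheory.integral_const_mul] at h
  unfold hI
  linear_combination -h

lemma hI_rec2 (ω t : ℝ) (m : ℕ) :
    hI ω t (m + 1) 0 = (I * ω + t) * hI ω t m 0 := by
  have hi : MeasureTheory.Integrable (fun s => (I * ω + t) * hG ω t m 0 s
      - hG ω t (m + 1) 0 s) :=
    ((hG_integrable ω t m 0).const_mul _).sub (hG_integrable ω t (m + 1) 0)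
  have h := MeasureTheory.integral_eq_zero_of_hasDerivAt_of_integrable (f := hG ω t m 0)
    (f' := fun s => (I * ω + t) * hG ω t m 0 s - hG ω t (m + 1) 0 s)
    (fun s => by
      refine (hG_hasDerivAt ω t m 0 s).congr_deriv ?_
      unfold hG
      rw [hU_rec m]
      push_cast
      ring) hi (hG_integrable ω t m 0)
  rw [MeasureTheory.integral_sub ((hG_integrable ω t m 0).const_mul _)
      (hG_integrable ω t (m + 1) 0), MeasureTheory.integral_const_mul] at h
  unfold hI
  linear_combination -h

lemma hI_zero (ω t : ℝ) :
    hI ω t 0 0 = Complex.exp (-(t : ℂ) ^ 2 / 2 + (I * ω - t) ^ 2 / 4) := by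
  have h := integral_cexp_quadratic (b := -1) (by norm_num) (I * ω - t) (-(t : ℂ) ^ 2 / 2)
  have e : ∀ s : ℝ, hG ω t 0 0 s = ((Real.pi ^ (-(1 : ℝ) / 2) : ℝ) : ℂ) *
      Complex.exp (-1 * (s : ℂ) ^ 2 + (I * ω - t) * s + -(t : ℂ) ^ 2 / 2) := by
    intro s
    unfold hG
    rw [hU_zero, hU_zero]
    have e1 : Real.pi ^ (-(1 : ℝ) / 2) = Real.pi ^ (-(1 : ℝ) / 4) * Real.pi ^ (-(1 : ℝ) / 4) := by
      rw [← Real.rpow_add Real.pi_pos]; norm_num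
    have e2 : Complex.exp (-1 * (s : ℂ) ^ 2 + (I * ω - t) * s + -(t : ℂ) ^ 2 / 2)
        = Complex.exp (I * ω * s) * Complex.exp (-((s : ℂ) + t) ^ 2 / 2) *
          Complex.exp (-(s : ℂ) ^ 2 / 2) := by
      rw [← Complex.exp_add, ← Complex.exp_add]; ring_nf
    rw [e1, e2]
    push_cast
    ring
  unfold hI
  simp_rw [e]
  rw [MeasureTheory.integral_const_mul, h]
  have e3 : ((Real.pi ^ (-(1 : ℝ) / 2) : ℝ) : ℂ) * ((Real.pi : ℂ) / - -1) ^ (1 / 2 : ℂ) = 1 := by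
    rw [Complex.ofReal_cpow Real.pi_pos.le, neg_neg, div_one,
      ← Complex.cpow_add _ _ (by exact_mod_cast Real.pi_ne_zero)]
    push_cast
    norm_num
  rw [← mul_assoc, e3, one_mul]
  congr 1
  ring

lemma hI_formula (ω t : ℝ) (n : ℕ) : ∀ m : ℕ, hI ω t m n = hI ω t 0 0 *
    ∑ k ∈ Finset.range (n + 1), (m.choose k : ℂ) * n.choose k * k.factorial * 2 ^ k *
      (I * ω + t) ^ (m - k) * (I * ω - t) ^ (n - k) := by
  induction n with
  | zero =>
    intro m
    induction m with
    | zero => simp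
    | succ m ih => rw [hI_rec2, ih]; simp; ring
  | succ n ih =>
    intro m
    rw [hI_rec1, ih m, ih (m - 1)]
    set p : ℂ := I * ω + t
    set q : ℂ := I * ω - t
    rw [Finset.sum_range_succ' _ (n + 1)]
    have e1 : ∀ k ∈ Finset.range (n + 1), (m.choose (k + 1) : ℂ) * (n + 1).choose (k + 1) *
        (k + 1).factorial * 2 ^ (k + 1) * p ^ (m - (k + 1)) * q ^ (n + 1 - (k + 1)) =
        2 * m * (((m - 1).choose k : ℂ) * n.choose k * k.factorial * 2 ^ k *
          p ^ (m - 1 - k) * q ^ (n - k)) +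
        (m.choose (k + 1) : ℂ) * n.choose (k + 1) *
        (k + 1).factorial * 2 ^ (k + 1) * p ^ (m - (k + 1)) * q ^ (n - k) := by
      intro k _
      have c1 : ((m.choose (k + 1) : ℂ)) * (k + 1) = m * (m - 1).choose k := by
        rcases m with _ | m
        · simp
        · have := Nat.add_one_mul_choose_eq m k
          simp only [Nat.add_sub_cancel]
          exact_mod_cast this.symm
      rw [Nat.choose_succ_succ n k, Nat.factorial_succ, Nat.add_sub_add_right,
        show m - (k + 1) = m - 1 - k by omega]
      push_cast
      linear_combination (n.choose k * k.factorial * 2 ^ (k + 1) *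
          p ^ (m - 1 - k) * q ^ (n - k)) * c1
    rw [Finset.sum_congr rfl e1, Finset.sum_add_distrib, ← Finset.mul_sum]
    have e2 : q * ∑ k ∈ Finset.range (n + 1), (m.choose k : ℂ) * n.choose k * k.factorial * 2 ^ k *
        p ^ (m - k) * q ^ (n - k) = ∑ k ∈ Finset.range (n + 1), (m.choose (k + 1) : ℂ) *
        n.choose (k + 1) * (k + 1).factorial * 2 ^ (k + 1) * p ^ (m - (k + 1)) * q ^ (n - k)
        + p ^ m * q ^ (n + 1) := by
      rw [Finset.sum_range_succ', Finset.sum_range_succ, mul_add, Finset.mul_sum]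
      have : ∀ k ∈ Finset.range n, q * ((m.choose (k + 1) : ℂ) *
        n.choose (k + 1) * (k + 1).factorial * 2 ^ (k + 1) * p ^ (m - (k + 1)) * q ^ (n - (k + 1)))
        = (m.choose (k + 1) : ℂ) *
        n.choose (k + 1) * (k + 1).factorial * 2 ^ (k + 1) * p ^ (m - (k + 1)) * q ^ (n - k) := by
        intro k hk
        have hk := Finset.mem_range.1 hk
        rw [show n - k = (n - (k + 1)) + 1 by omega, pow_succ]; ring
      rw [Finset.sum_congr rfl this]
      simp
      ring
    simp only [Nat.choose_zero_right, Nat.factorial_zero, pow_zero, Nat.sub_zero, Nat.cast_one]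
    linear_combination (hI ω t 0 0) * e2

lemma hasSum_fiber {f : (ℕ × ℕ) × (ℕ × ℕ) → ℂ} {A : ℂ} (hf : HasSum f A) :
    HasSum (fun l : ℕ × ℕ => ∑ r ∈ Finset.HasAntidiagonal.antidiagonal l.1, ∑ s ∈ Finset.HasAntidiagonal.antidiagonal l.2,
      f (r, s)) A := by
  have h := hf.tsum_fiberwise (fun z : (ℕ × ℕ) × (ℕ × ℕ) => (z.1.1 + z.1.2, z.2.1 + z.2.2))
  refine Eq.subst (motive := fun f => HasSum f A) ?_ h
  funext l
  symm
  rw [← Finset.sum_product', ← Finset.tsum_subtype']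
  have : ((Finset.HasAntidiagonal.antidiagonal l.1 ×ˢ Finset.HasAntidiagonal.antidiagonal l.2 :
      Finset ((ℕ × ℕ) × (ℕ × ℕ))) : Set ((ℕ × ℕ) × (ℕ × ℕ))) =
      (fun z : (ℕ × ℕ) × (ℕ × ℕ) => (z.1.1 + z.1.2, z.2.1 + z.2.2)) ⁻¹' {l} := by
    ext z
    rcases l with ⟨l1, l2⟩
    simp
  rw [this]

/-- four-fold series -/
noncomputable def g4 (c d : ℂ) (b : ℤ) (z : (ℕ × ℕ) × (ℕ × ℕ)) : ℂ :=
  if (z.1.1 : ℤ) + z.2.1 - (z.1.2 + z.2.2) = b then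
    (c ^ z.1.1 / z.1.1.factorial * (c ^ z.1.2 / z.1.2.factorial)) *
    (d ^ z.2.1 / z.2.1.factorial * ((-d) ^ z.2.2 / z.2.2.factorial)) else 0

lemma g4_summable (c d : ℂ) (b : ℤ) : Summable (g4 c d b) := by
  have h1 := Real.summable_pow_div_factorial ‖c‖
  have h2 := Real.summable_pow_div_factorial ‖d‖
  have n1 : (0 : ℕ → ℝ) ≤ fun n => ‖c‖ ^ n / n.factorial := fun n => by positivity
  have n2 : (0 : ℕ → ℝ) ≤ fun n => ‖d‖ ^ n / n.factorial := fun n => by positivity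
  have h3 := h1.mul_of_nonneg h1 n1 n1
  have h4 := h2.mul_of_nonneg h2 n2 n2
  have h5 := h3.mul_of_nonneg h4 (fun z => by positivity) (fun z => by positivity)
  refine Summable.of_norm_bounded h5 fun z => ?_
  unfold g4
  split_ifs
  · simp
  · rw [norm_zero]; positivity

lemma sum_antidiag_exp (c d : ℂ) (n : ℕ) : ∑ r ∈ Finset.HasAntidiagonal.antidiagonal n,
    (c ^ r.1 / r.1.factorial) * (d ^ r.2 / r.2.factorial) = (c + d) ^ n / n.factorial := by
  rw [(Commute.all c d).add_pow', Finset.sum_div]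
  refine Finset.sum_congr rfl fun r hr => ?_
  have hr := Finset.HasAntidiagonal.mem_antidiagonal.1 hr
  subst hr
  rw [nsmul_eq_mul, Nat.cast_add_choose]
  have h1 : ((r.1 + r.2).factorial : ℂ) ≠ 0 := Nat.cast_ne_zero.2 (Nat.factorial_ne_zero _)
  have h2 : (r.1.factorial : ℂ) ≠ 0 := Nat.cast_ne_zero.2 (Nat.factorial_ne_zero _)
  have h3 : (r.2.factorial : ℂ) ≠ 0 := Nat.cast_ne_zero.2 (Nat.factorial_ne_zero _)
  field_simp

lemma boundaryKernel_eq (a : ℝ) (ha : 0 ≤ a) (x y : ℝ) (b : ℤ) :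
    boundaryKernel a x y b = ∑' z : ℕ × ℕ, if (z.1 : ℤ) - z.2 = b then
      ((Real.sqrt (a / 4) : ℂ) ^ z.1 * (I * y + x) ^ z.1 / z.1.factorial) *
      ((Real.sqrt (a / 4) : ℂ) ^ z.2 * (I * y - x) ^ z.2 / z.2.factorial) else 0 := by
  set u : ℂ := (Real.sqrt (a / 4) : ℂ) with hu
  have h := (g4_summable (u * (I * y)) (u * x) b).hasSum
  have hA := (hasSum_fiber h).tsum_eq
  have hB := (hasSum_fiber ((Equiv.prodProdProdComm ℕ ℕ ℕ ℕ).hasSum_iff.2 h)).tsum_eq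
  rw [← hB] at hA
  unfold boundaryKernel
  convert hA using 1
  · refine tsum_congr fun l => ?_
    rcases l with ⟨l1, l2⟩
    simp only [altVandermonde, Finset.Nat.sum_antidiagonal_eq_sum_range_succ_mk]
    push_cast
    rw [Finset.mul_sum, Finset.sum_mul, Finset.sum_mul, Finset.sum_div]
    refine Finset.sum_congr rfl fun i hi => ?_
    rw [Finset.mul_sum, Finset.sum_mul, Finset.sum_mul, Finset.sum_div]
    refine Finset.sum_congr rfl fun j hj => ?_
    have hi : i ≤ l1 := by simpa [Nat.lt_succ_iff] using hi
    have hj : j ≤ l2 := by simpa [Nat.lt_succ_iff] using hj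
    have hpow : (((a / 4) ^ (((l1 : ℝ) + l2) / 2) : ℝ) : ℂ) = u ^ l1 * u ^ l2 := by
      rw [← pow_add, hu, Real.sqrt_eq_rpow, ← Complex.ofReal_pow, ← Real.rpow_mul_natCast (by positivity)]
      push_cast
      ring_nf
    obtain ⟨i', rfl⟩ := Nat.exists_eq_add_of_le hi
    obtain ⟨j', rfl⟩ := Nat.exists_eq_add_of_le hj
    simp only [g4, Nat.add_sub_cancel_left]
    rw [hpow]
    have hc : (2 * ((i : ℤ) + j) = b + (i + i' : ℕ) + (j + j' : ℕ)) ↔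
      (i : ℤ) + j - (i' + j') = b := by push_cast; constructor <;> intro h <;> linarith
    simp only [hc]
    split_ifs
    · rw [Nat.cast_add_choose, Nat.cast_add_choose]
      have h1 : ((i + i').factorial : ℂ) ≠ 0 := Nat.cast_ne_zero.2 (Nat.factorial_ne_zero _)
      have h2 : ((j + j').factorial : ℂ) ≠ 0 := Nat.cast_ne_zero.2 (Nat.factorial_ne_zero _)
      have h3 : (i.factorial : ℂ) ≠ 0 := Nat.cast_ne_zero.2 (Nat.factorial_ne_zero _)
      have h4 : (i'.factorial : ℂ) ≠ 0 := Nat.cast_ne_zero.2 (Nat.factorial_ne_zero _)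
      have h5 : (j.factorial : ℂ) ≠ 0 := Nat.cast_ne_zero.2 (Nat.factorial_ne_zero _)
      have h6 : (j'.factorial : ℂ) ≠ 0 := Nat.cast_ne_zero.2 (Nat.factorial_ne_zero _)
      rw [neg_pow (u * (x : ℂ))]
      field_simp
      ring
    · simp
  · refine tsum_congr fun z => ?_
    rcases z with ⟨j, i⟩
    have e : ∀ r ∈ Finset.HasAntidiagonal.antidiagonal j, ∀ s ∈ Finset.HasAntidiagonal.antidiagonal i,
        (g4 (u * (I * y)) (u * x) b ∘ (Equiv.prodProdProdComm ℕ ℕ ℕ ℕ)) (r, s) =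
        if (j : ℤ) - i = b then
          ((u * (I * y)) ^ r.1 / r.1.factorial * ((u * x) ^ r.2 / r.2.factorial)) *
          ((u * (I * y)) ^ s.1 / s.1.factorial * ((-(u * x)) ^ s.2 / s.2.factorial)) else 0 := by
      intro r hr s hs
      have hr := Finset.HasAntidiagonal.mem_antidiagonal.1 hr
      have hs := Finset.HasAntidiagonal.mem_antidiagonal.1 hs
      subst hr hs
      simp only [g4, Function.comp, Equiv.prodProdProdComm_apply]
      push_cast
      congr 1
      ring
    simp only
    rw [Finset.sum_congr rfl fun r hr => Finset.sum_congr rfl fun s hs => e r hr s hs]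
    split_ifs
    · rw [← Finset.sum_mul_sum, sum_antidiag_exp, sum_antidiag_exp, ← mul_pow, ← mul_pow]
      congr 3 <;> ring
    · simp

lemma sqrt_pow_nat (w : ℝ) (hw : 0 ≤ w) (j : ℕ) : Real.sqrt (w ^ j) = Real.sqrt w ^ j := by
  induction j with
  | zero => simp
  | succ j ih => rw [pow_succ, pow_succ, Real.sqrt_mul (by positivity), ih]

lemma sqrt_bound (m j : ℕ) (ε M : ℝ) (hε : 0 < ε) (hM : 0 ≤ M) (h : ε * m ≤ 2 * M ^ 2) :
    Real.sqrt (m.descFactorial j * (ε / 2) ^ j) ≤ M ^ j := by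
  apply Real.sqrt_le_iff.2 ⟨by positivity, ?_⟩
  have h1 : (m.descFactorial j : ℝ) ≤ (m : ℝ) ^ j := by exact_mod_cast Nat.descFactorial_le_pow m j
  calc (m.descFactorial j : ℝ) * (ε / 2) ^ j ≤ (m : ℝ) ^ j * (ε / 2) ^ j := by gcongr
    _ = (ε * m / 2) ^ j := by rw [← mul_pow]; ring
    _ ≤ (M ^ 2) ^ j := by gcongr; linarith
    _ = (M ^ j) ^ 2 := by rw [← pow_mul, ← pow_mul, mul_comm]

lemma sqrt_lim (a : ℝ) (ha : 0 ≤ a) (e : ℕ → ℝ) (m : ℕ → ℕ) (he : ∀ q, 0 < e q)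
    (h1 : Tendsto e atTop (nhds 0)) (h2 : Tendsto (fun q => e q * m q) atTop (nhds (a / 2)))
    (j : ℕ) : Tendsto (fun q => Real.sqrt ((m q).descFactorial j * (e q / 2) ^ j)) atTop
      (nhds (Real.sqrt (a / 4) ^ j)) := by
  have key : Tendsto (fun q => ((m q).descFactorial j : ℝ) * (e q / 2) ^ j) atTop
      (nhds ((a / 4) ^ j)) := by
    have hl : ∀ l : ℕ, Tendsto (fun q => ((m q - l : ℕ) : ℝ) * (e q / 2)) atTop (nhds (a / 4)) := by
      intro l
      have : Tendsto (fun q => max ((e q * m q) / 2 - e q * l / 2) 0) atTop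
          (nhds (max ((a / 2) / 2 - 0 * l / 2) 0)) :=
        ((h2.div_const 2).sub ((h1.mul_const (l : ℝ)).div_const 2)).max tendsto_const_nhds
      have e0 : max ((a / 2) / 2 - 0 * (l : ℝ) / 2) 0 = a / 4 := by
        rw [max_eq_left] <;> [ring; (ring_nf; positivity)]
      rw [e0] at this
      refine this.congr fun q => ?_
      have := he q
      rcases le_total l (m q) with h | h
      · have h' : (l : ℝ) ≤ m q := by exact_mod_cast h
        rw [Nat.cast_sub h, max_eq_left] <;> nlinarith
      · have h' : (m q : ℝ) ≤ l := by exact_mod_cast h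
        rw [Nat.sub_eq_zero_of_le h, max_eq_right]
        · simp
        · nlinarith
    have := tendsto_finsetProd (Finset.range j) (fun l _ => hl l)
    simp only [Finset.prod_const, Finset.card_range] at this
    refine this.congr fun q => ?_
    rw [Finset.prod_mul_distrib, Nat.descFactorial_eq_prod_range, Finset.prod_const,
      Finset.card_range, Nat.cast_prod]
  have := (Real.continuous_sqrt.tendsto _).comp key
  have e1 := sqrt_pow_nat (a / 4) (by positivity) j
  rwa [e1] at this

/-- general term -/
noncomputable def tT (ε : ℝ) (P Q : ℂ) (b : ℤ) (m n : ℕ) (z : ℕ × ℕ) : ℂ :=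
  if (z.1 : ℤ) - z.2 = b then
      ((Real.sqrt (m.descFactorial z.1 * (ε / 2) ^ z.1) : ℂ) * P ^ z.1 / z.1.factorial) *
      ((Real.sqrt (n.descFactorial z.2 * (ε / 2) ^ z.2) : ℂ) * Q ^ z.2 / z.2.factorial) else 0

lemma tT_term (ε : ℝ) (hε : 0 < ε) (P Q : ℂ) (k j i : ℕ) :
    (((2 ^ (k + j) * (k + j).factorial : ℝ) ^ (-(1 : ℝ) / 2) : ℝ) : ℂ) *
    (((2 ^ (k + i) * (k + i).factorial : ℝ) ^ (-(1 : ℝ) / 2) : ℝ) : ℂ) *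
    (((k + j).choose k : ℂ) * (k + i).choose k * k.factorial * 2 ^ k *
      (Real.sqrt ε * P) ^ j * (Real.sqrt ε * Q) ^ i) =
      ((Real.sqrt ((k + j).descFactorial j * (ε / 2) ^ j) : ℂ) * P ^ j / j.factorial) *
      ((Real.sqrt ((k + i).descFactorial i * (ε / 2) ^ i) : ℂ) * Q ^ i / i.factorial) := by
  have hk : (k.factorial : ℂ) ≠ 0 := Nat.cast_ne_zero.2 (Nat.factorial_ne_zero _)
  have hj : (j.factorial : ℂ) ≠ 0 := Nat.cast_ne_zero.2 (Nat.factorial_ne_zero _)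
  have hi : (i.factorial : ℂ) ≠ 0 := Nat.cast_ne_zero.2 (Nat.factorial_ne_zero _)
  have key : ∀ l : ℕ, ((2 ^ (k + l) * (k + l).factorial : ℝ) ^ (-(1 : ℝ) / 2)) *
      ((k + l).choose k) * Real.sqrt (k.factorial * 2 ^ k) * Real.sqrt ε ^ l =
      Real.sqrt ((k + l).descFactorial l * (ε / 2) ^ l) / l.factorial := by
    intro l
    have hfac : ((k + l).factorial : ℝ) = k.factorial * (k + l).descFactorial l := by
      have := Nat.factorial_mul_descFactorial (n := k + l) (k := l) (by omega)
      rw [Nat.add_sub_cancel] at this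
      exact_mod_cast this.symm
    have hch : (((k + l).choose k : ℕ) : ℝ) = (k + l).descFactorial l / l.factorial := by
      rw [Nat.cast_add_choose, hfac]
      field_simp
    have hD : (0 : ℝ) < (k + l).descFactorial l := by
      exact_mod_cast Nat.descFactorial_pos.2 (by omega)
    have hr : ∀ w : ℝ, 0 < w → w ^ (-(1 : ℝ) / 2) = 1 / Real.sqrt w := by
      intro w hw
      rw [Real.sqrt_eq_rpow, neg_div, Real.rpow_neg hw.le, one_div (w ^ _)]
    rw [hr _ (by positivity), hch, hfac]
    set D : ℝ := ((k + l).descFactorial l : ℝ)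
    have h2 : Real.sqrt ε ^ l = Real.sqrt (ε ^ l) := (sqrt_pow_nat ε hε.le l).symm
    rw [h2, pow_add, div_pow]
    have e1 : (2 : ℝ) ^ k * 2 ^ l * (k.factorial * D) = (k.factorial * 2 ^ k) * (2 ^ l * D) := by ring
    rw [e1, Real.sqrt_mul (by positivity), Real.sqrt_mul (x := 2 ^ l) (by positivity),
      Real.sqrt_mul (x := D) (by positivity), Real.sqrt_div (x := ε ^ l) (by positivity)]
    have hs : D = Real.sqrt D * Real.sqrt D := (Real.mul_self_sqrt hD.le).symm
    have p1 : 0 < Real.sqrt D := Real.sqrt_pos.2 hD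
    have p2 : 0 < Real.sqrt ((2 : ℝ) ^ l) := Real.sqrt_pos.2 (by positivity)
    have p3 : 0 < Real.sqrt (k.factorial * (2 : ℝ) ^ k) := Real.sqrt_pos.2 (by positivity)
    have p4 : (0 : ℝ) < l.factorial := by positivity
    field_simp
    nlinarith
  have K1 := congrArg (fun r : ℝ => (r : ℂ)) (key j)
  have K2 := congrArg (fun r : ℝ => (r : ℂ)) (key i)
  have hsq : (Real.sqrt (k.factorial * 2 ^ k) : ℂ) * Real.sqrt (k.factorial * 2 ^ k) =
      k.factorial * 2 ^ k := by
    rw [← Complex.ofReal_mul, Real.mul_self_sqrt (by positivity)]; push_cast; ring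
  simp only [Complex.ofReal_mul, Complex.ofReal_div, Complex.ofReal_pow, Complex.ofReal_natCast] at K1 K2
  rw [mul_pow, mul_pow]
  rw [mul_div_right_comm, mul_div_right_comm, ← K1, ← K2]
  linear_combination (-((((2 ^ (k + j) * (k + j).factorial : ℝ) ^ (-(1 : ℝ) / 2) : ℝ) : ℂ) *
    (((2 ^ (k + i) * (k + i).factorial : ℝ) ^ (-(1 : ℝ) / 2) : ℝ) : ℂ) *
    (((k + j).choose k : ℂ) * (k + i).choose k *
      ((Real.sqrt ε : ℂ) ^ j * P ^ j) * ((Real.sqrt ε : ℂ) ^ i * Q ^ i)))) * hsq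

lemma tT_tsum (ε : ℝ) (hε : 0 < ε) (P Q : ℂ) (b : ℤ) (m n : ℕ) (hmn : (m : ℤ) = n + b) :
    (((2 ^ m * m.factorial : ℝ) ^ (-(1 : ℝ) / 2) : ℝ) : ℂ) *
    (((2 ^ n * n.factorial : ℝ) ^ (-(1 : ℝ) / 2) : ℝ) : ℂ) *
    ∑ k ∈ Finset.range (n + 1), ((m.choose k : ℂ) * n.choose k * k.factorial * 2 ^ k *
      (Real.sqrt ε * P) ^ (m - k) * (Real.sqrt ε * Q) ^ (n - k)) = ∑' z, tT ε P Q b m n z := by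
  rw [tsum_eq_sum (s := (Finset.range (min m n + 1)).image fun k => (m - k, n - k)) ?_,
    Finset.sum_image ?_, ← Finset.sum_subset (s₁ := Finset.range (min m n + 1)) ?_ ?_,
    Finset.mul_sum]
  · refine Finset.sum_congr rfl fun k hk => ?_
    have hk := Finset.mem_range.1 hk
    obtain ⟨j, rfl⟩ := Nat.exists_eq_add_of_le (show k ≤ m by omega)
    obtain ⟨i, rfl⟩ := Nat.exists_eq_add_of_le (show k ≤ n by omega)
    simp only [Nat.add_sub_cancel_left, tT]
    rw [if_pos (by push_cast at hmn; linarith)]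
    exact tT_term ε hε P Q k j i
  · intro k hk
    simp only [Finset.mem_range] at *
    omega
  · intro k hk hk'
    simp only [Finset.mem_range] at *
    rw [Nat.choose_eq_zero_of_lt (show m < k by omega)]
    simp
  · intro k hk k' hk' h
    simp only [Finset.coe_range, Set.mem_Iio, Prod.mk.injEq] at *
    omega
  · rintro ⟨j, i⟩ hz
    unfold tT
    split_ifs with h
    · simp only at h ⊢
      by_cases hj : m < j
      · rw [Nat.descFactorial_of_lt hj]; simp
      by_cases hi : n < i
      · rw [Nat.descFactorial_of_lt hi]; simp
      exfalso
      apply hz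
      rw [Finset.mem_image]
      refine ⟨m - j, ?_, ?_⟩
      · rw [Finset.mem_range]; omega
      · rw [Prod.mk.injEq]; omega
    · rfl

lemma integral_eq (ε x y : ℝ) (hε : 0 < ε) (m n : ℕ) :
    ∫ ξ : ℝ, Complex.exp (I * ε * ξ * y) * (hermiteScaled m ε (ξ + x) : ℂ) *
      (hermiteScaled n ε ξ : ℂ) =
    (((2 ^ m * m.factorial : ℝ) ^ (-(1 : ℝ) / 2) : ℝ) : ℂ) *
    (((2 ^ n * n.factorial : ℝ) ^ (-(1 : ℝ) / 2) : ℝ) : ℂ) *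
    hI (Real.sqrt ε * y) (Real.sqrt ε * x) m n := by
  set A : ℝ := (2 ^ m * m.factorial : ℝ) ^ (-(1 : ℝ) / 2) with hA
  set B : ℝ := (2 ^ n * n.factorial : ℝ) ^ (-(1 : ℝ) / 2) with hB
  have hs : (Real.sqrt ε : ℂ) * Real.sqrt ε = ε := by
    rw [← Complex.ofReal_mul, Real.mul_self_sqrt hε.le]
  have h4 : ε ^ ((1 : ℝ) / 4) * ε ^ ((1 : ℝ) / 4) = Real.sqrt ε := by
    rw [← Real.rpow_add hε, Real.sqrt_eq_rpow]; norm_num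
  have e : ∀ ξ : ℝ, Complex.exp (I * ε * ξ * y) * (hermiteScaled m ε (ξ + x) : ℂ) *
      (hermiteScaled n ε ξ : ℂ) = (Real.sqrt ε * A * B : ℂ) *
        hG (Real.sqrt ε * y) (Real.sqrt ε * x) m n (Real.sqrt ε * ξ) := by
    intro ξ
    have em : hermiteScaled m ε (ξ + x) = ε ^ ((1 : ℝ) / 4) * (A * hU m (Real.sqrt ε * ξ + Real.sqrt ε * x)) := by
      rw [← mul_add, Real.sqrt_eq_rpow]; rfl
    have en : hermiteScaled n ε ξ = ε ^ ((1 : ℝ) / 4) * (B * hU n (Real.sqrt ε * ξ)) := by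
      rw [Real.sqrt_eq_rpow]; rfl
    have ee : I * (ε : ℂ) * ξ * y = I * ((Real.sqrt ε * y : ℝ) : ℂ) * ((Real.sqrt ε * ξ : ℝ) : ℂ) := by
      rw [← hs]; push_cast; ring
    rw [em, en, ee, ← h4]
    unfold hG
    push_cast
    ring
  simp_rw [e]
  rw [MeasureTheory.integral_const_mul,
    MeasureTheory.Measure.integral_comp_mul_left (hG (Real.sqrt ε * y) (Real.sqrt ε * x) m n)]
  have hp : 0 < Real.sqrt ε := Real.sqrt_pos.2 hε
  rw [abs_of_pos (by positivity), Complex.real_smul]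
  have hp' : (Real.sqrt ε : ℂ) ≠ 0 := by exact_mod_cast hp.ne'
  unfold hI
  push_cast
  field_simp

/-- If `ε_q → 0`, `ε_q n_q → a/2` and `m_q := n_q + b ≥ 0` eventually, then
`∫ e^{iε_q ξ y} H_{m_q,ε_q}(ξ+x) H_{n_q,ε_q}(ξ) dξ → K(a,x,y,b)`. -/
theorem kernel_boundary_limit (b : ℤ) (a : ℝ) (ha : 0 ≤ a) (x y : ℝ)
    (εq : ℕ → ℝ) (nq : ℕ → ℕ) (hεq : ∀ q, 0 < εq q)
    (h1 : Tendsto εq atTop (nhds 0))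
    (h2 : Tendsto (fun q => εq q * nq q) atTop (nhds (a / 2)))
    (h3 : ∀ᶠ q in atTop, 0 ≤ (nq q : ℤ) + b) :
    Tendsto (fun q =>
        ∫ ξ : ℝ, Complex.exp (I * εq q * ξ * y) *
          (hermiteScaled ((nq q : ℤ) + b).toNat (εq q) (ξ + x) : ℂ) *
          (hermiteScaled (nq q) (εq q) ξ : ℂ))
      atTop (nhds (boundaryKernel a x y b)) := by

  have hmlim : Tendsto (fun q => εq q * (((nq q : ℤ) + b).toNat : ℝ)) atTop (nhds (a / 2)) := by
    have h : Tendsto (fun q => εq q * nq q + εq q * b) atTop (nhds (a / 2 + 0 * b)) :=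
      h2.add (h1.mul_const _)
    rw [zero_mul, add_zero] at h
    refine h.congr' ?_
    filter_upwards [h3] with q hq
    have : ((((nq q : ℤ) + b).toNat : ℤ) : ℝ) = (((nq q : ℤ) + b : ℤ) : ℝ) := by
      rw [Int.toNat_of_nonneg hq]
    push_cast at this
    rw [this]; ring
  set P : ℂ := I * y + x with hP
  set Q : ℂ := I * y - x with hQ
  set M : ℝ := Real.sqrt (a / 4 + 1) with hM
  have hM2 : M ^ 2 = a / 4 + 1 := Real.sq_sqrt (by positivity)
  have hM0 : 0 ≤ M := Real.sqrt_nonneg _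
  have htsum : Tendsto (fun q => ∑' z, tT (εq q) P Q b ((nq q : ℤ) + b).toNat (nq q) z) atTop
      (nhds (boundaryKernel a x y b)) := by
    rw [boundaryKernel_eq a ha]
    have s1 := Real.summable_pow_div_factorial (M * ‖P‖)
    have s2 := Real.summable_pow_div_factorial (M * ‖Q‖)
    refine tendsto_tsum_of_dominated_convergence (s1.mul_of_nonneg s2 (fun n => by positivity)
      (fun n => by positivity)) ?_ ?_
    · intro z
      unfold tT
      split_ifs
      · have l1 := (Complex.continuous_ofReal.tendsto _).comp (sqrt_lim a ha εq _ hεq h1 hmlim z.1)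
        have l2 := (Complex.continuous_ofReal.tendsto _).comp (sqrt_lim a ha εq _ hεq h1 h2 z.2)
        rw [Complex.ofReal_pow] at l1 l2
        exact ((l1.mul_const _).div_const _).mul ((l2.mul_const _).div_const _)
      · exact tendsto_const_nhds
    · have lt : a / 2 < 2 * M ^ 2 := by rw [hM2]; linarith
      filter_upwards [hmlim.eventually_lt_const lt, h2.eventually_lt_const lt] with q b1 b2 z
      unfold tT
      split_ifs
      · simp only [norm_mul, norm_div, norm_pow, Complex.norm_real, Complex.norm_natCast,
          Real.norm_eq_abs, abs_of_nonneg (Real.sqrt_nonneg _), mul_pow]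
        gcongr
        · exact sqrt_bound _ _ _ _ (hεq q) hM0 b1.le
        · exact sqrt_bound _ _ _ _ (hεq q) hM0 b2.le
      · rw [norm_zero]; positivity
  have h00 : Tendsto (fun q => hI (Real.sqrt (εq q) * y) (Real.sqrt (εq q) * x) 0 0) atTop
      (nhds 1) := by
    have hs : Tendsto (fun q => Real.sqrt (εq q)) atTop (nhds 0) := by
      simpa [Function.comp_def] using (Real.continuous_sqrt.tendsto _).comp h1
    have hc : Continuous fun r : ℝ => Complex.exp (-(((r * x : ℝ) : ℂ)) ^ 2 / 2 +
        (I * ((r * y : ℝ) : ℂ) - ((r * x : ℝ) : ℂ)) ^ 2 / 4) := by fun_prop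
    have := (hc.tendsto 0).comp hs
    simp only [hI_zero]
    simpa [Function.comp_def] using this
  have hprod := h00.mul htsum
  rw [one_mul] at hprod
  refine hprod.congr' ?_
  filter_upwards [h3] with q hq
  rw [integral_eq _ _ _ (hεq q), hI_formula _ _ (nq q),
    ← tT_tsum (εq q) (hεq q) P Q b _ _ (Int.toNat_of_nonneg hq)]
  have e1 : I * ((Real.sqrt (εq q) * y : ℝ) : ℂ) + ((Real.sqrt (εq q) * x : ℝ) : ℂ) =
      Real.sqrt (εq q) * P := by rw [hP]; push_cast; ring
  have e2 : I * ((Real.sqrt (εq q) * y : ℝ) : ℂ) - ((Real.sqrt (εq q) * x : ℝ) : ℂ) =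
      Real.sqrt (εq q) * Q := by rw [hQ]; push_cast; ring
  rw [e1, e2]
  ring
end

section
/- For every a ≥ 0 and b ∈ ℤ, the function (x, y) ↦ K(a, x, y, b) is smooth on ℝ², and it satisfies the eigenvalue equation −(∂²_{xx} + ∂²_{yy}) K(a, x, y, b) = a · K(a, x, y, b) for all x, y ∈ ℝ. -/
open Complex

instance fact_zero_lt_one_bk : Fact ((0 : ℝ) < 1) := ⟨one_pos⟩

/-- The circle algebra in which the kernel is a Fourier coefficient of an exponential. -/
abbrev BKAlg : Type := C(AddCircle (1 : ℝ), ℂ)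

lemma bk_deriv (L : BKAlg →L[ℝ] ℂ) (C A D : BKAlg) (t : ℝ) :
    HasDerivAt (fun t : ℝ => L (C * NormedSpace.exp (t • A + D)))
      (L (C * A * NormedSpace.exp (t • A + D))) t := by
  have h1 : HasDerivAt (fun t : ℝ => t • A + D) A t := by
    simpa using ((hasDerivAt_id t).smul_const A).add_const D
  have h2 := (hasFDerivAt_exp (𝕂 := ℝ) (x := t • A + D)).comp_hasDerivAt t h1
  have h3 := L.hasFDerivAt.comp_hasDerivAt t (h2.const_mul C)
  have e : C * A * NormedSpace.exp (t • A + D) = C * (NormedSpace.exp (t • A + D) * A) := by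
    ring
  rw [e]
  exact h3

lemma bk_deriv2 (L : BKAlg →L[ℝ] ℂ) (A D : BKAlg) (t : ℝ) :
    deriv (deriv (fun t : ℝ => L (NormedSpace.exp (t • A + D)))) t =
      L (A * A * NormedSpace.exp (t • A + D)) := by
  have h : deriv (fun t : ℝ => L (NormedSpace.exp (t • A + D))) =
      fun t : ℝ => L (A * NormedSpace.exp (t • A + D)) := by
    funext s
    have := (bk_deriv L 1 A D s).deriv
    simpa using this
  rw [h]
  exact (bk_deriv L A A D t).deriv

lemma bk_smooth (L : BKAlg →L[ℝ] ℂ) (A B : BKAlg) :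
    ContDiff ℝ (⊤ : ℕ∞) (fun Z : ℝ × ℝ => L (NormedSpace.exp (Z.1 • A + Z.2 • B))) := by
  have he : ContDiff ℝ (⊤ : ℕ∞) (NormedSpace.exp : BKAlg → BKAlg) := by
    rw [contDiff_iff_contDiffAt]
    intro x
    exact (NormedSpace.exp_analytic (𝕂 := ℝ) x).contDiffAt
  refine L.contDiff.comp (he.comp ?_)
  fun_prop

/-- The `b`-th Fourier coefficient as a continuous functional. -/
lemma bk_functional (b : ℤ) : ∃ φ : BKAlg →L[ℂ] ℂ,
    ∀ n : ℤ, φ (fourier n) = if n = b then 1 else 0 := by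
  refine ⟨(innerSL ℂ (fourierLp (T := (1 : ℝ)) 2 b)).comp
    (ContinuousMap.toLp 2 AddCircle.haarAddCircle ℂ), fun n => ?_⟩
  have := orthonormal_iff_ite.mp (orthonormal_fourier (T := (1 : ℝ))) b n
  simp only [eq_comm (a := n)]
  exact this

lemma bk_fourier_mul (m n : ℤ) :
    (fourier m * fourier n : BKAlg) = fourier (m + n) := by
  ext x
  exact (fourier_add).symm

lemma bk_fourier_zero : (fourier 0 : BKAlg) = 1 := by
  ext x
  exact fourier_zero

lemma bk_fourier_pow (m : ℤ) (n : ℕ) :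
    (fourier m : BKAlg) ^ n = fourier (n * m) := by
  induction n with
  | zero => simp [bk_fourier_zero]
  | succ k ih =>
    rw [pow_succ, ih, bk_fourier_mul]
    congr 1
    push_cast
    ring

lemma bk_coeff (b : ℤ) (φ : BKAlg →L[ℂ] ℂ)
    (hφ : ∀ n : ℤ, φ (fourier n) = if n = b then 1 else 0) (p q : ℕ) :
    φ ((fourier 1 + fourier (-1)) ^ p * (fourier 1 - fourier (-1)) ^ q) =
      (altVandermonde p q b : ℂ) := by
  rw [sub_eq_add_neg, add_pow, add_pow, Finset.sum_mul_sum, map_sum, altVandermonde]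
  push_cast
  refine Finset.sum_congr rfl fun i hi => ?_
  rw [map_sum]
  refine Finset.sum_congr rfl fun j hj => ?_
  have hi' : i ≤ p := by simpa [Nat.lt_succ_iff] using hi
  have hj' : j ≤ q := by simpa [Nat.lt_succ_iff] using hj
  have key : (fourier 1 : BKAlg) ^ i * fourier (-1) ^ (p - i) * (p.choose i : BKAlg) *
      (fourier 1 ^ j * (-fourier (-1)) ^ (q - j) * (q.choose j : BKAlg)) =
      ((-1) ^ (q - j) * (p.choose i : ℂ) * (q.choose j : ℂ)) •
        (fourier (2 * ((i : ℤ) + j) - p - q) : BKAlg) := by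
    have e : (fourier (2 * ((i : ℤ) + j) - p - q) : BKAlg) =
        fourier 1 ^ i * fourier (-1) ^ (p - i) * (fourier 1 ^ j * fourier (-1) ^ (q - j)) := by
      simp only [bk_fourier_pow, bk_fourier_mul]
      congr 1
      rw [Nat.cast_sub hi', Nat.cast_sub hj']
      ring
    rw [e, neg_pow, Algebra.smul_def]
    simp only [map_mul, map_pow, map_neg, map_one, map_natCast]
    ring
  rw [key, map_smul, hφ, smul_eq_mul]
  congr 1
  refine if_congr ?_ rfl rfl
  constructor <;> intro h <;> linarith

lemma bk_scalar (a : ℝ) (ha : 0 ≤ a) (p q : ℕ) :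
    (a / 4) ^ (((p : ℝ) + q) / 2) = Real.sqrt (a / 4) ^ p * Real.sqrt (a / 4) ^ q := by
  rw [← pow_add, Real.sqrt_eq_rpow, ← Real.rpow_natCast, ← Real.rpow_mul (by positivity)]
  congr 1
  push_cast
  ring

lemma bk_repr (a : ℝ) (ha : 0 ≤ a) (b : ℤ) (φ : BKAlg →L[ℂ] ℂ)
    (hφ : ∀ n : ℤ, φ (fourier n) = if n = b then 1 else 0) (x y : ℝ) :
    boundaryKernel a x y b = φ (NormedSpace.exp
      (x • ((Real.sqrt (a / 4) : ℂ) • (fourier 1 - fourier (-1) : BKAlg)) +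
        y • ((Real.sqrt (a / 4) * I : ℂ) • (fourier 1 + fourier (-1) : BKAlg)))) := by
  set c := Real.sqrt (a / 4)
  set M : BKAlg := fourier 1 - fourier (-1) with hM
  set P : BKAlg := fourier 1 + fourier (-1) with hP
  have hx : x • ((c : ℂ) • M) = (x * c : ℂ) • M := by
    ext z
    simp [mul_assoc]
  have hy : y • ((c * I : ℂ) • P) = (y * (c * I) : ℂ) • P := by
    ext z
    simp [mul_assoc]
  have hs := fun X : BKAlg => NormedSpace.norm_expSeries_summable' (𝕂 := ℂ) X
  rw [hx, hy, add_comm, NormedSpace.exp_add_of_commute (Commute.all _ _),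
    NormedSpace.exp_eq_tsum ℂ]
  rw [tsum_mul_tsum_of_summable_norm (hs _) (hs _),
    φ.map_tsum (summable_mul_of_summable_norm (hs _) (hs _)), boundaryKernel]
  refine tsum_congr fun ℓ => ?_
  obtain ⟨p, q⟩ := ℓ
  simp only [smul_pow, smul_mul_smul_comm, smul_smul, map_smul]
  rw [← bk_coeff b φ hφ, bk_scalar a ha]
  push_cast
  simp only [smul_eq_mul, mul_pow]
  field_simp
  simp only [c, M, P]
  ring

/-- `(x,y) ↦ K(a,x,y,b)` is smooth and `−Δ_{x,y} K = a K`. -/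
theorem boundaryKernel_laplacian (a : ℝ) (ha : 0 ≤ a) (b : ℤ) :
    ContDiff ℝ (⊤ : ℕ∞) (fun Z : ℝ × ℝ => boundaryKernel a Z.1 Z.2 b) ∧
    ∀ x y : ℝ,
      -(deriv (deriv (fun t : ℝ => boundaryKernel a t y b)) x +
          deriv (deriv (fun t : ℝ => boundaryKernel a x t b)) y) =
        (a : ℂ) * boundaryKernel a x y b := by
  obtain ⟨φ, hφ⟩ := bk_functional b
  have hr := bk_repr a ha b φ hφ
  set A : BKAlg := (Real.sqrt (a / 4) : ℂ) • (fourier 1 - fourier (-1) : BKAlg) with hA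
  set B : BKAlg := (Real.sqrt (a / 4) * I : ℂ) • (fourier 1 + fourier (-1) : BKAlg) with hB
  set L : BKAlg →L[ℝ] ℂ := φ.restrictScalars ℝ with hL
  have hr' : ∀ x y : ℝ, boundaryKernel a x y b = L (NormedSpace.exp (x • A + y • B)) := hr
  have hc : (Real.sqrt (a / 4) : ℂ) * (Real.sqrt (a / 4) : ℂ) = (a : ℂ) / 4 := by
    rw [← Complex.ofReal_mul, Real.mul_self_sqrt (by positivity)]
    push_cast
    rfl
  have hAB : A * A + B * B = (-(a : ℂ)) • (1 : BKAlg) := by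
    have hFG : (fourier 1 : BKAlg) * fourier (-1) = 1 := by
      rw [bk_fourier_mul]
      exact bk_fourier_zero
    have hB2 : (Real.sqrt (a / 4) * I : ℂ) * (Real.sqrt (a / 4) * I : ℂ) = -((a : ℂ) / 4) := by
      rw [mul_mul_mul_comm, hc, I_mul_I]
      ring
    rw [hA, hB, smul_mul_smul_comm, smul_mul_smul_comm, hc, hB2, neg_smul, ← sub_eq_add_neg,
      ← smul_sub]
    have : ((fourier 1 - fourier (-1)) * (fourier 1 - fourier (-1)) -
        (fourier 1 + fourier (-1)) * (fourier 1 + fourier (-1)) : BKAlg) = (-4 : ℂ) • 1 := by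
      rw [Algebra.smul_def, ← hFG]
      simp only [map_neg, map_ofNat]
      ring
    rw [this, smul_smul]
    congr 1
    ring
  simp only [hr']
  refine ⟨bk_smooth L A B, fun x y => ?_⟩
  rw [bk_deriv2]
  simp only [add_comm (x • A)]
  rw [bk_deriv2, ← map_add, ← add_mul, hAB, ← map_neg, smul_mul_assoc, one_mul, neg_smul, neg_neg]
  simp only [hL, ContinuousLinearMap.coe_restrictScalars', map_smul, smul_eq_mul]
end

section
/- For every η > 0, n, m ∈ ℕ and x, y ∈ ℝ, the kernel W(n, m, η, x, y) := ∫_ℝ e^{−i η ξ y} H_{m,η}(ξ + x/2) H_{n,η}(ξ − x/2) dξ is smooth in (x, y) and satisfies (m − n) W(n, m, η, x, y) = i (x ∂_y − y ∂_x) W(n, m, η, x, y). -/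
open Complex

/-- The Fourier kernel `W(n,m,η,x,y) = ∫ e^{−iηξy} H_{m,η}(ξ+x/2) H_{n,η}(ξ−x/2) dξ`. -/
noncomputable def Wker (n m : ℕ) (η x y : ℝ) : ℂ :=
  ∫ ξ : ℝ, Complex.exp (-(I * η * ξ * y)) *
    (hermiteScaled m η (ξ + x / 2) : ℂ) * (hermiteScaled n η (ξ - x / 2) : ℂ)

open Polynomial in
noncomputable def hpol : ℕ → Polynomial ℝ
  | 0 => 1
  | n + 1 => 2 * X * hpol n - derivative (hpol n)

open Polynomial in
lemma hpol_ode (n : ℕ) :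
    2 * X * derivative (hpol n) - derivative (derivative (hpol n)) = 2 * (n : ℝ[X]) * hpol n := by
  induction n with
  | zero => simp [hpol]
  | succ n ih =>
    have h1 : derivative (hpol (n + 1)) = (2 * n + 2) * hpol n := by
      simp only [hpol, derivative_sub, derivative_mul, derivative_X, derivative_ofNat]
      linear_combination ih
    have h2 : derivative (derivative (hpol (n + 1))) = (2 * n + 2) * derivative (hpol n) := by
      rw [h1]; simp [derivative_mul]
    rw [h2, h1]
    simp only [hpol]
    push_cast
    ring

/-- polynomial times Gaussian -/
noncomputable def pg (p : Polynomial ℝ) (t : ℝ) : ℝ := p.eval t * Real.exp (-(t ^ 2) / 2)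

/-- derivative on polynomial parts -/
noncomputable def dl (p : Polynomial ℝ) : Polynomial ℝ :=
  Polynomial.derivative p - Polynomial.X * p

lemma pg_hasDerivAt (p : Polynomial ℝ) (t : ℝ) : HasDerivAt (pg p) (pg (dl p) t) t := by
  have h1 := p.hasDerivAt t
  have h2 : HasDerivAt (fun t : ℝ => -(t ^ 2) / 2) (-t) t := by
    have := ((hasDerivAt_pow 2 t).neg).div_const 2
    refine this.congr_deriv ?_
    simp
    ring
  have := h1.mul h2.exp
  refine this.congr_deriv ?_
  simp [pg, dl]
  ring

lemma pg_bound (p : Polynomial ℝ) : ∃ C, 0 ≤ C ∧ ∀ t, |pg p t| ≤ C * Real.exp (-(t ^ 2) / 4) := by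
  induction p using Polynomial.induction_on' with
  | add p q hp hq =>
    obtain ⟨C, hC, h⟩ := hp
    obtain ⟨D, hD, k⟩ := hq
    refine ⟨C + D, by positivity, fun t => ?_⟩
    have : pg (p + q) t = pg p t + pg q t := by simp [pg, add_mul]
    rw [this, add_mul]
    exact (abs_add_le _ _).trans (add_le_add (h t) (k t))
  | monomial k a =>
    refine ⟨|a| * (k.factorial * Real.exp 1), by positivity, fun t => ?_⟩
    have h1 : |t| ^ k ≤ k.factorial * Real.exp |t| := by
      have := Real.pow_div_factorial_le_exp |t| (abs_nonneg t) k
      rw [div_le_iff₀ (by positivity)] at this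
      linarith
    have h2 : Real.exp |t| ≤ Real.exp (1 + t ^ 2 / 4) := by
      apply Real.exp_le_exp.2
      nlinarith [sq_nonneg (|t| - 2), sq_abs t]
    have h3 : Real.exp (-(t ^ 2) / 2) = Real.exp (-(t ^ 2) / 4) * Real.exp (-(t ^ 2) / 4) := by
      rw [← Real.exp_add]; congr 1; ring
    have h4 : Real.exp (1 + t ^ 2 / 4) * Real.exp (-(t ^ 2) / 4) = Real.exp 1 := by
      rw [← Real.exp_add]; congr 1; ring
    simp only [pg, Polynomial.eval_monomial, abs_mul, abs_pow, Real.abs_exp]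
    rw [h3]
    calc |a| * |t| ^ k * (Real.exp (-(t ^ 2) / 4) * Real.exp (-(t ^ 2) / 4))
        ≤ |a| * (k.factorial * Real.exp (1 + t ^ 2 / 4)) *
          (Real.exp (-(t ^ 2) / 4) * Real.exp (-(t ^ 2) / 4)) := by
          gcongr
          exact h1.trans (by gcongr)
      _ = |a| * (k.factorial * (Real.exp (1 + t ^ 2 / 4) * Real.exp (-(t ^ 2) / 4))) *
          Real.exp (-(t ^ 2) / 4) := by ring
      _ = _ := by rw [h4]

lemma pg_continuous (p : Polynomial ℝ) : Continuous (pg p) := by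
  unfold pg
  have := p.continuous
  fun_prop

noncomputable def FF (p q : Polynomial ℝ) (Z : ℝ × ℝ) (ξ : ℝ) : ℂ :=
  Complex.exp (-(I * ξ * Z.2)) * (pg p (ξ + Z.1 / 2) : ℂ) * (pg q (ξ - Z.1 / 2) : ℂ)

noncomputable def VV (p q : Polynomial ℝ) (Z : ℝ × ℝ) : ℂ := ∫ ξ : ℝ, FF p q Z ξ

lemma FF_bound (p q : Polynomial ℝ) :
    ∃ C, 0 ≤ C ∧ ∀ Z ξ, ‖FF p q Z ξ‖ ≤ C * Real.exp (-(1/2) * ξ ^ 2) := by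
  obtain ⟨C, hC, h⟩ := pg_bound p
  obtain ⟨D, hD, k⟩ := pg_bound q
  refine ⟨C * D, by positivity, fun Z ξ => ?_⟩
  have h0 : ‖Complex.exp (-(I * ξ * Z.2))‖ = 1 := by
    rw [Complex.norm_exp]; simp
  unfold FF
  rw [norm_mul, norm_mul, h0, one_mul, Complex.norm_real, Complex.norm_real, Real.norm_eq_abs,
    Real.norm_eq_abs]
  calc _ ≤ (C * Real.exp (-((ξ + Z.1 / 2) ^ 2) / 4)) * (D * Real.exp (-((ξ - Z.1 / 2) ^ 2) / 4)) :=
        mul_le_mul (h _) (k _) (abs_nonneg _) (by positivity)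
    _ = C * D * Real.exp (-((ξ + Z.1 / 2) ^ 2) / 4 + -((ξ - Z.1 / 2) ^ 2) / 4) := by
        rw [Real.exp_add]; ring
    _ ≤ _ := by
        gcongr
        nlinarith [sq_nonneg Z.1]

lemma FF_continuous (p q : Polynomial ℝ) (Z : ℝ × ℝ) : Continuous (FF p q Z) := by
  unfold FF
  have := pg_continuous p
  have := pg_continuous q
  fun_prop

lemma FF_integrable (p q : Polynomial ℝ) (Z : ℝ × ℝ) : MeasureTheory.Integrable (FF p q Z) := by
  obtain ⟨C, hC, h⟩ := FF_bound p q
  refine MeasureTheory.Integrable.mono' ((integrable_exp_neg_mul_sq (b := 1/2) (by norm_num)).const_mul C)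
    (FF_continuous p q Z).aestronglyMeasurable (Filter.Eventually.of_forall fun ξ => h Z ξ)

/-- x-derivative part -/
noncomputable def Fx (p q : Polynomial ℝ) (Z : ℝ × ℝ) (ξ : ℝ) : ℂ :=
  (1/2 : ℂ) * (FF (dl p) q Z ξ - FF p (dl q) Z ξ)

/-- y-derivative part -/
noncomputable def Fy (p q : Polynomial ℝ) (Z : ℝ × ℝ) (ξ : ℝ) : ℂ :=
  (-I/2 : ℂ) * (FF (Polynomial.X * p) q Z ξ + FF p (Polynomial.X * q) Z ξ)

noncomputable def FD (p q : Polynomial ℝ) (Z : ℝ × ℝ) (ξ : ℝ) : ℝ × ℝ →L[ℝ] ℂ :=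
  (ContinuousLinearMap.fst ℝ ℝ ℝ).smulRight (Fx p q Z ξ) +
  (ContinuousLinearMap.snd ℝ ℝ ℝ).smulRight (Fy p q Z ξ)

lemma FF_hasFDerivAt (p q : Polynomial ℝ) (Z : ℝ × ℝ) (ξ : ℝ) :
    HasFDerivAt (fun Z => FF p q Z ξ) (FD p q Z ξ) Z := by
  have f1 : HasFDerivAt (fun Z : ℝ × ℝ => Z.1) (ContinuousLinearMap.fst ℝ ℝ ℝ) Z := hasFDerivAt_fst
  have f2 : HasFDerivAt (fun Z : ℝ × ℝ => Z.2) (ContinuousLinearMap.snd ℝ ℝ ℝ) Z := hasFDerivAt_snd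
  have e1 : HasDerivAt (fun t : ℝ => Complex.exp (-(I * ξ * t)))
      (Complex.exp (-(I * ξ * Z.2)) * (-(I * ξ))) Z.2 := by
    have h : HasDerivAt (fun t : ℝ => -(I * ξ * (t : ℂ))) (-(I * ξ)) Z.2 := by
      have := ((hasDerivAt_id (Z.2)).ofReal_comp.const_mul (I * ξ)).neg
      refine HasDerivAt.congr_deriv this ?_
      simp
    exact h.cexp
  have a1 : HasDerivAt (fun t : ℝ => (pg p (ξ + t / 2) : ℂ))
      ((pg (dl p) (ξ + Z.1 / 2) * (1 / 2) : ℝ) : ℂ) Z.1 := by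
    have h : HasDerivAt (fun t : ℝ => ξ + t / 2) (1 / 2) Z.1 :=
      ((hasDerivAt_id Z.1).div_const 2).const_add ξ
    exact ((pg_hasDerivAt p (ξ + Z.1 / 2)).comp Z.1 h).ofReal_comp
  have b1 : HasDerivAt (fun t : ℝ => (pg q (ξ - t / 2) : ℂ))
      ((pg (dl q) (ξ - Z.1 / 2) * (-(1 / 2)) : ℝ) : ℂ) Z.1 := by
    have h : HasDerivAt (fun t : ℝ => ξ - t / 2) (-(1 / 2)) Z.1 :=
      ((hasDerivAt_id Z.1).div_const 2).const_sub ξ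
    exact ((pg_hasDerivAt q (ξ - Z.1 / 2)).comp Z.1 h).ofReal_comp
  have key := ((e1.hasFDerivAt.comp Z f2).mul (a1.hasFDerivAt.comp Z f1)).mul
    (b1.hasFDerivAt.comp Z f1)
  refine HasFDerivAt.congr_fderiv key ?_
  ext <;> simp [FD, Fx, Fy, FF, pg] <;> ring

lemma FD_bound (p q : Polynomial ℝ) :
    ∃ C, 0 ≤ C ∧ ∀ Z ξ, ‖FD p q Z ξ‖ ≤ C * Real.exp (-(1/2) * ξ ^ 2) := by
  obtain ⟨C1, h1, k1⟩ := FF_bound (dl p) q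
  obtain ⟨C2, h2, k2⟩ := FF_bound p (dl q)
  obtain ⟨C3, h3, k3⟩ := FF_bound (Polynomial.X * p) q
  obtain ⟨C4, h4, k4⟩ := FF_bound p (Polynomial.X * q)
  refine ⟨C1 + C2 + C3 + C4, by positivity, fun Z ξ => ?_⟩
  have a : ‖Fx p q Z ξ‖ ≤ 1/2 * (‖FF (dl p) q Z ξ‖ + ‖FF p (dl q) Z ξ‖) := by
    unfold Fx
    rw [norm_mul]
    have : ‖(1/2 : ℂ)‖ = 1/2 := by simp
    rw [this]
    gcongr
    exact norm_sub_le _ _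
  have b : ‖Fy p q Z ξ‖ ≤ 1/2 * (‖FF (Polynomial.X * p) q Z ξ‖ + ‖FF p (Polynomial.X * q) Z ξ‖) := by
    unfold Fy
    rw [norm_mul]
    have : ‖(-I/2 : ℂ)‖ = 1/2 := by simp
    rw [this]
    gcongr
    exact norm_add_le _ _
  have c : ‖FD p q Z ξ‖ ≤ ‖Fx p q Z ξ‖ + ‖Fy p q Z ξ‖ := by
    unfold FD
    refine (norm_add_le _ _).trans ?_
    rw [ContinuousLinearMap.norm_smulRight_apply, ContinuousLinearMap.norm_smulRight_apply]
    have := ContinuousLinearMap.norm_fst_le ℝ ℝ ℝ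
    have := ContinuousLinearMap.norm_snd_le ℝ ℝ ℝ
    nlinarith [norm_nonneg (Fx p q Z ξ), norm_nonneg (Fy p q Z ξ)]
  have := k1 Z ξ
  have := k2 Z ξ
  have := k3 Z ξ
  have := k4 Z ξ
  have := norm_nonneg (Fx p q Z ξ)
  have := norm_nonneg (Fy p q Z ξ)
  linarith

/-- integrated derivatives -/
noncomputable def Vx (p q : Polynomial ℝ) (Z : ℝ × ℝ) : ℂ :=
  (1/2 : ℂ) * (VV (dl p) q Z - VV p (dl q) Z)

noncomputable def Vy (p q : Polynomial ℝ) (Z : ℝ × ℝ) : ℂ :=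
  (-I/2 : ℂ) * (VV (Polynomial.X * p) q Z + VV p (Polynomial.X * q) Z)

lemma Fx_integrable (p q : Polynomial ℝ) (Z : ℝ × ℝ) : MeasureTheory.Integrable (Fx p q Z) :=
  ((FF_integrable _ _ Z).sub (FF_integrable _ _ Z)).const_mul _

lemma Fy_integrable (p q : Polynomial ℝ) (Z : ℝ × ℝ) : MeasureTheory.Integrable (Fy p q Z) :=
  ((FF_integrable _ _ Z).add (FF_integrable _ _ Z)).const_mul _

lemma VV_hasFDerivAt (p q : Polynomial ℝ) (Z : ℝ × ℝ) :
    HasFDerivAt (VV p q) ((ContinuousLinearMap.fst ℝ ℝ ℝ).smulRight (Vx p q Z) +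
  (ContinuousLinearMap.snd ℝ ℝ ℝ).smulRight (Vy p q Z)) Z := by
  obtain ⟨C, hC, h⟩ := FD_bound p q
  let L1 := ContinuousLinearMap.smulRightL ℝ (ℝ × ℝ) ℂ (ContinuousLinearMap.fst ℝ ℝ ℝ)
  let L2 := ContinuousLinearMap.smulRightL ℝ (ℝ × ℝ) ℂ (ContinuousLinearMap.snd ℝ ℝ ℝ)
  have hFD : FD p q Z = fun ξ => L1 (Fx p q Z ξ) + L2 (Fy p q Z ξ) := rfl
  have i1 := L1.integrable_comp (Fx_integrable p q Z)
  have i2 := L2.integrable_comp (Fy_integrable p q Z)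
  have iFD : MeasureTheory.Integrable (FD p q Z) := by rw [hFD]; exact i1.add i2
  have key := hasFDerivAt_integral_of_dominated_of_fderiv_le (𝕜 := ℝ) (μ := MeasureTheory.volume)
    (F := FF p q) (F' := FD p q) (x₀ := Z) (s := Set.univ)
    (bound := fun ξ => C * Real.exp (-(1/2) * ξ ^ 2)) Filter.univ_mem
    (Filter.Eventually.of_forall fun Z => (FF_continuous p q Z).aestronglyMeasurable)
    (FF_integrable p q Z) iFD.aestronglyMeasurable
    (Filter.Eventually.of_forall fun ξ Z _ => h Z ξ)
    ((integrable_exp_neg_mul_sq (b := 1/2) (by norm_num)).const_mul C)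
    (Filter.Eventually.of_forall fun ξ Z _ => FF_hasFDerivAt p q Z ξ)
  refine HasFDerivAt.congr_fderiv key ?_
  rw [hFD, MeasureTheory.integral_add i1 i2, L1.integral_comp_comm (Fx_integrable p q Z),
    L2.integral_comp_comm (Fy_integrable p q Z)]
  have e1 : ∫ ξ, Fx p q Z ξ = Vx p q Z := by
    unfold Fx Vx VV
    rw [MeasureTheory.integral_const_mul, MeasureTheory.integral_sub (FF_integrable _ _ Z) (FF_integrable _ _ Z)]
  have e2 : ∫ ξ, Fy p q Z ξ = Vy p q Z := by
    unfold Fy Vy VV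
    rw [MeasureTheory.integral_const_mul, MeasureTheory.integral_add (FF_integrable _ _ Z) (FF_integrable _ _ Z)]
  rw [e1, e2]
  rfl

lemma VV_contDiff_nat (n : ℕ) : ∀ p q : Polynomial ℝ, ContDiff ℝ n (VV p q) := by
  induction n with
  | zero =>
    intro p q
    exact contDiff_zero.2 (continuous_iff_continuousAt.2 fun Z => (VV_hasFDerivAt p q Z).continuousAt)
  | succ n ih =>
    intro p q
    push_cast
    refine contDiff_succ_iff_hasFDerivAt.2 ⟨_, ?_, VV_hasFDerivAt p q⟩
    let L1 := ContinuousLinearMap.smulRightL ℝ (ℝ × ℝ) ℂ (ContinuousLinearMap.fst ℝ ℝ ℝ)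
    let L2 := ContinuousLinearMap.smulRightL ℝ (ℝ × ℝ) ℂ (ContinuousLinearMap.snd ℝ ℝ ℝ)
    have hx : ContDiff ℝ n (Vx p q) := contDiff_const.mul ((ih _ _).sub (ih _ _))
    have hy : ContDiff ℝ n (Vy p q) := contDiff_const.mul ((ih _ _).add (ih _ _))
    exact (L1.contDiff.comp hx).add (L2.contDiff.comp hy)

lemma VV_contDiff (p q : Polynomial ℝ) : ContDiff ℝ (⊤ : ℕ∞) (VV p q) :=
  contDiff_infty.2 fun n => VV_contDiff_nat n p q

/-- integration by parts -/
lemma VV_parts (p q : Polynomial ℝ) (Z : ℝ × ℝ) :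
    I * Z.2 * VV p q Z = VV (dl p) q Z + VV p (dl q) Z := by
  have hd : ∀ ξ, HasDerivAt (FF p q Z)
      (FF (dl p) q Z ξ + FF p (dl q) Z ξ - I * Z.2 * FF p q Z ξ) ξ := by
    intro ξ
    have e1 : HasDerivAt (fun t : ℝ => Complex.exp (-(I * t * Z.2)))
        (Complex.exp (-(I * ξ * Z.2)) * (-(I * Z.2))) ξ := by
      have h : HasDerivAt (fun t : ℝ => -(I * (t : ℂ) * Z.2)) (-(I * Z.2)) ξ := by
        have := (((hasDerivAt_id ξ).ofReal_comp.const_mul I).mul_const (Z.2 : ℂ)).neg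
        refine HasDerivAt.congr_deriv this ?_
        simp
      exact h.cexp
    have a1 : HasDerivAt (fun t : ℝ => (pg p (t + Z.1 / 2) : ℂ)) (pg (dl p) (ξ + Z.1 / 2) : ℂ) ξ :=
      ((pg_hasDerivAt p (ξ + Z.1 / 2)).comp_add_const ξ (Z.1 / 2)).ofReal_comp
    have b1 : HasDerivAt (fun t : ℝ => (pg q (t - Z.1 / 2) : ℂ)) (pg (dl q) (ξ - Z.1 / 2) : ℂ) ξ :=
      ((pg_hasDerivAt q (ξ - Z.1 / 2)).comp_sub_const ξ (Z.1 / 2)).ofReal_comp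
    refine ((e1.mul a1).mul b1).congr_deriv ?_
    simp only [FF, Pi.mul_apply]
    ring
  have i1 := FF_integrable (dl p) q Z
  have i2 := FF_integrable p (dl q) Z
  have i3 := (FF_integrable p q Z).const_mul (I * Z.2)
  have i12 := i1.add i2
  have h0 := MeasureTheory.integral_eq_zero_of_hasDerivAt_of_integrable hd (i12.sub i3)
    (FF_integrable p q Z)
  have h1 := MeasureTheory.integral_sub i12 i3
  have h2 := MeasureTheory.integral_add i1 i2
  have h3 := MeasureTheory.integral_const_mul (μ := MeasureTheory.volume) (I * Z.2 : ℂ) (FF p q Z)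
  simp only [Pi.add_apply] at h1
  rw [h0, h2, h3] at h1
  unfold VV
  linear_combination h1

lemma VV_eig_left (p q : Polynomial ℝ) (c : ℝ) (Z : ℝ × ℝ)
    (h : Polynomial.X * (Polynomial.X * p) - dl (dl p) = Polynomial.C c * p) :
    VV (Polynomial.X * (Polynomial.X * p)) q Z - VV (dl (dl p)) q Z = c * VV p q Z := by
  unfold VV
  rw [← MeasureTheory.integral_sub (FF_integrable _ _ Z) (FF_integrable _ _ Z),
    ← MeasureTheory.integral_const_mul]
  congr 1; ext ξ
  have := congrArg (fun r => ((Polynomial.eval (ξ + Z.1 / 2) r : ℝ) : ℂ)) h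
  simp only [Polynomial.eval_sub, Polynomial.eval_mul, Polynomial.eval_X, Polynomial.eval_C] at this
  push_cast at this
  simp only [FF, pg, Polynomial.eval_mul, Polynomial.eval_X]
  push_cast
  linear_combination (Complex.exp (-(I * ξ * Z.2)) * Complex.exp (-((ξ + Z.1 / 2) ^ 2) / 2) * (((q.eval (ξ - Z.1 / 2) : ℝ) : ℂ) * Complex.exp (-((ξ - Z.1 / 2) ^ 2) / 2))) * this

lemma VV_eig_right (p q : Polynomial ℝ) (c : ℝ) (Z : ℝ × ℝ)
    (h : Polynomial.X * (Polynomial.X * q) - dl (dl q) = Polynomial.C c * q) :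
    VV p (Polynomial.X * (Polynomial.X * q)) Z - VV p (dl (dl q)) Z = c * VV p q Z := by
  unfold VV
  rw [← MeasureTheory.integral_sub (FF_integrable _ _ Z) (FF_integrable _ _ Z),
    ← MeasureTheory.integral_const_mul]
  congr 1; ext ξ
  have := congrArg (fun r => ((Polynomial.eval (ξ - Z.1 / 2) r : ℝ) : ℂ)) h
  simp only [Polynomial.eval_sub, Polynomial.eval_mul, Polynomial.eval_X, Polynomial.eval_C] at this
  push_cast at this
  simp only [FF, pg, Polynomial.eval_mul, Polynomial.eval_X]
  push_cast
  linear_combination (Complex.exp (-(I * ξ * Z.2)) * Complex.exp (-((ξ + Z.1 / 2) ^ 2) / 2) * (((p.eval (ξ + Z.1 / 2) : ℝ) : ℂ) * Complex.exp (-((ξ - Z.1 / 2) ^ 2) / 2))) * this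

lemma VV_XX (p q : Polynomial ℝ) (Z : ℝ × ℝ) :
    VV (Polynomial.X * (Polynomial.X * p)) q Z - VV p (Polynomial.X * (Polynomial.X * q)) Z
      = Z.1 * (VV (Polynomial.X * p) q Z + VV p (Polynomial.X * q) Z) := by
  unfold VV
  rw [← MeasureTheory.integral_sub (FF_integrable _ _ Z) (FF_integrable _ _ Z),
    ← MeasureTheory.integral_add (FF_integrable _ _ Z) (FF_integrable _ _ Z),
    ← MeasureTheory.integral_const_mul]
  congr 1; ext ξ
  simp only [FF, pg, Polynomial.eval_mul, Polynomial.eval_X]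
  push_cast
  ring

lemma hpol_eig (n : ℕ) : Polynomial.X * (Polynomial.X * hpol n) - dl (dl (hpol n))
    = Polynomial.C (2 * n + 1 : ℝ) * hpol n := by
  have := hpol_ode n
  simp only [dl, Polynomial.derivative_sub, Polynomial.derivative_mul, Polynomial.derivative_X]
  have e : Polynomial.C (2 * n + 1 : ℝ) = 2 * (n : Polynomial ℝ) + 1 := by
    simp only [map_add, map_mul, map_natCast, map_one, map_ofNat]
  rw [e]
  linear_combination this

lemma VV_rot (n m : ℕ) (Z : ℝ × ℝ) :
    ((m : ℂ) - n) * VV (hpol m) (hpol n) Z =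
      I * (Z.1 * Vy (hpol m) (hpol n) Z - Z.2 * Vx (hpol m) (hpol n) Z) := by
  have h1 := VV_eig_left (hpol m) (hpol n) _ Z (hpol_eig m)
  have h2 := VV_eig_right (hpol m) (hpol n) _ Z (hpol_eig n)
  have h3 := VV_XX (hpol m) (hpol n) Z
  have h4 := VV_parts (dl (hpol m)) (hpol n) Z
  have h5 := VV_parts (hpol m) (dl (hpol n)) Z
  unfold Vx Vy
  push_cast at h1 h2
  linear_combination (-1/2) * h1 + (1/2) * h2 + (1/2) * h3 + (1/2) * h4 - (1/2) * h5
    + (1/2) * Z.1 * (VV (Polynomial.X * hpol m) (hpol n) Z + VV (hpol m) (Polynomial.X * hpol n) Z) * I_sq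

lemma hermite_iter (n : ℕ) : ((fun f : ℝ → ℝ => fun t => -deriv f t + t * f t)^[n]
      (fun t => Real.pi ^ (-(1 : ℝ) / 4) * Real.exp (-(t ^ 2) / 2)))
    = fun t => Real.pi ^ (-(1 : ℝ) / 4) * pg (hpol n) t := by
  induction n with
  | zero => funext t; simp [pg, hpol]
  | succ n ih =>
    rw [Function.iterate_succ_apply', ih]
    funext t
    have := ((pg_hasDerivAt (hpol n) t).const_mul (Real.pi ^ (-(1 : ℝ) / 4))).deriv
    simp only [this]
    simp only [pg, dl, hpol, Polynomial.eval_sub, Polynomial.eval_mul, Polynomial.eval_X,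
      Polynomial.eval_ofNat]
    ring

lemma Wker_eq (η : ℝ) (hη : 0 < η) (n m : ℕ) : ∃ s : ℝ, ∃ K : ℂ, ∀ x y,
    Wker n m η x y = K * VV (hpol m) (hpol n) (s * x, s * y) := by
  set s : ℝ := η ^ ((1 : ℝ) / 2) with hs
  have hs0 : 0 < s := Real.rpow_pos_of_pos hη _
  have hss : s * s = η := by
    rw [hs, ← Real.rpow_add hη]; norm_num
  let c : ℕ → ℝ := fun n => η ^ ((1 : ℝ) / 4) * (((2 ^ n * n.factorial : ℝ) ^ (-(1 : ℝ) / 2)) *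
    Real.pi ^ (-(1 : ℝ) / 4))
  have hc : ∀ n x, hermiteScaled n η x = c n * pg (hpol n) (s * x) := by
    intro n x
    simp only [hermiteScaled, hermiteFun, hermite_iter, c, ← hs]
    ring
  refine ⟨s, c m * c n * ((s⁻¹ : ℝ) : ℂ), fun x y => ?_⟩
  have h := MeasureTheory.Measure.integral_comp_mul_left (FF (hpol m) (hpol n) (s * x, s * y)) s
  rw [abs_of_pos (inv_pos.2 hs0), Complex.real_smul] at h
  unfold VV
  rw [mul_assoc, ← h, ← MeasureTheory.integral_const_mul]
  unfold Wker
  congr 1; ext ξ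
  rw [hc, hc]
  simp only [FF]
  have e1 : s * ξ + s * x / 2 = s * (ξ + x / 2) := by ring
  have e2 : s * ξ - s * x / 2 = s * (ξ - x / 2) := by ring
  have e3 : -(I * ((s * ξ : ℝ) : ℂ) * ((s * y : ℝ) : ℂ)) = -(I * η * ξ * y) := by
    rw [← hss]; push_cast; ring
  rw [e1, e2, e3]
  push_cast
  ring

/-- `W` is smooth in `(x,y)` and satisfies `(m−n) W = i (x ∂_y − y ∂_x) W`. -/
theorem Wker_rotation (η : ℝ) (hη : 0 < η) (n m : ℕ) :
    ContDiff ℝ (⊤ : ℕ∞) (fun Z : ℝ × ℝ => Wker n m η Z.1 Z.2) ∧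
    ∀ x y : ℝ,
      ((m : ℂ) - (n : ℂ)) * Wker n m η x y =
        I * ((x : ℂ) * deriv (fun t : ℝ => Wker n m η x t) y -
          (y : ℂ) * deriv (fun t : ℝ => Wker n m η t y) x) := by
  obtain ⟨s, K, hW⟩ := Wker_eq η hη n m
  simp only [hW]
  refine ⟨?_, fun x y => ?_⟩
  · refine contDiff_const.mul ((VV_contDiff (hpol m) (hpol n)).comp ?_)
    fun_prop
  · have hV := VV_hasFDerivAt (hpol m) (hpol n) (s * x, s * y)
    have gy : HasDerivAt (fun t : ℝ => (s * x, s * t)) ((0 : ℝ), s) y := by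
      refine (hasDerivAt_const y (s * x)).prodMk ?_
      simpa using (hasDerivAt_id y).const_mul s
    have gx : HasDerivAt (fun t : ℝ => (s * t, s * y)) (s, (0 : ℝ)) x := by
      refine HasDerivAt.prodMk ?_ (hasDerivAt_const x (s * y))
      simpa using (hasDerivAt_id x).const_mul s
    have dy := ((hV.comp_hasDerivAt y gy).const_mul K).deriv
    have dx := ((hV.comp_hasDerivAt x gx).const_mul K).deriv
    simp only [Function.comp_def] at dx dy
    rw [dx, dy]
    have := VV_rot n m (s * x, s * y)
    simp at this ⊢
    linear_combination K * this
end
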